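/- Let M>0. There exist constants C>0 and A₀≥4 such that: for all A≥A₀, all R≥1, all L with 0<L≤A^{-3/2}, and all u∈H¹(S_R;ℂ) satisfying ‖u‖_∞ ≤ 1 and ∫_{S_R}|u|² dx ≤ M L^{-2/3} R, one has ∫_{S_R∩{|x₂|≥A}} ( |(∇−iA_van)u|² − L^{-2/3}|u|² + (L^{-2/3}/2)|u|⁴ ) dx ≥ 2 R L^{-4/3} ∫₀¹ g(b) db − C R L^{-1}. -/

import Mathlib

open MeasureTheory Real Set Filter Topology

noncomputable section

/-- The open square `Q_r = (-r/2, r/2) × (-r/2, r/2)`. -/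
def Qsq (r : ℝ) : Set (ℝ × ℝ) := Ioo (-r/2) (r/2) ×ˢ Ioo (-r/2) (r/2)

/-- The vertical strip `S_R = (-R/2, R/2) × ℝ`. -/
def Strip (R : ℝ) : Set (ℝ × ℝ) := Ioo (-R/2) (R/2) ×ˢ (univ : Set ℝ)

/-- The magnetic potential `A₀(x) = (-x₂/2, x₁/2)` of the constant unit magnetic field. -/
def A₀ (x : ℝ × ℝ) : ℝ × ℝ := (-x.2 / 2, x.1 / 2)

/-- The magnetic potential `A_van(x) = (-x₂²/2, 0)` generating the field `B(x) = x₂`. -/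
def Avan (x : ℝ × ℝ) : ℝ × ℝ := (-x.2 ^ 2 / 2, 0)

/-- The magnetic gradient energy density `|(∇ - iA)u|²` at `x`. -/
def magGradSq (A : ℝ × ℝ → ℝ × ℝ) (u : ℝ × ℝ → ℂ) (x : ℝ × ℝ) : ℝ :=
  ‖fderiv ℝ u x (1, 0) - Complex.I * ((A x).1 : ℂ) * u x‖ ^ 2 +
  ‖fderiv ℝ u x (0, 1) - Complex.I * ((A x).2 : ℂ) * u x‖ ^ 2

/-- The Ginzburg–Landau functional `F_{b,Q_r}` on the square `Q_r`. -/
def Fsq (b r : ℝ) (u : ℝ × ℝ → ℂ) : ℝ :=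
  ∫ x in Qsq r, (b * magGradSq A₀ u x - ‖u x‖ ^ 2 + ‖u x‖ ^ 4 / 2)

/-- (Smooth surrogate of) membership in `H¹(Q_r; ℂ)`. -/
def MemH1sq (u : ℝ × ℝ → ℂ) : Prop := ContDiff ℝ 1 u

/-- (Smooth surrogate of) membership in `H¹₀(Q_r; ℂ)`: vanishing on the boundary. -/
def MemH10sq (r : ℝ) (u : ℝ × ℝ → ℂ) : Prop :=
  ContDiff ℝ 1 u ∧ ∀ x ∈ frontier (Qsq r), u x = 0

/-- The Dirichlet ground-state energy `e_D(b, r)`. -/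
def eD (b r : ℝ) : ℝ := sInf (Fsq b r '' {u | MemH10sq r u})

/-- The Neumann ground-state energy `e_N(b, r)`. -/
def eN (b r : ℝ) : ℝ := sInf (Fsq b r '' {u | MemH1sq u})

/-- The energy density of the strip functional `𝓔_{L,R}` at `x`. -/
def stripDensity (L : ℝ) (u : ℝ × ℝ → ℂ) (x : ℝ × ℝ) : ℝ :=
  magGradSq Avan u x - L ^ (-(2:ℝ)/3) * ‖u x‖ ^ 2 + (L ^ (-(2:ℝ)/3) / 2) * ‖u x‖ ^ 4

/-- The strip functional `𝓔_{L,R}`. -/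
def Estrip (L R : ℝ) (u : ℝ × ℝ → ℂ) : ℝ := ∫ x in Strip R, stripDensity L u x

/-- (Surrogate of) membership in the space `H¹_{mag,0}(S_R)`. -/
def MemH1mag0 (R : ℝ) (u : ℝ × ℝ → ℂ) : Prop :=
  ContDiff ℝ 1 u ∧
  IntegrableOn (fun x => ‖u x‖ ^ 2) (Strip R) ∧
  IntegrableOn (magGradSq Avan u) (Strip R) ∧
  IntegrableOn (fun x => ‖u x‖ ^ 4) (Strip R) ∧
  ∀ x ∈ frontier (Strip R), u x = 0

/-- The ground-state energy `e_gs(L; R)` of the strip functional. -/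
def egs (L R : ℝ) : ℝ := sInf (Estrip L R '' {u | MemH1mag0 R u})

/-- `g : (0,∞) → ℝ` is the thermodynamic limit of the Dirichlet square energies. -/
def IsLimitG (g : ℝ → ℝ) : Prop :=
  ∀ b > 0, Tendsto (fun r => eD b r / r ^ 2) atTop (nhds (g b))

/-- `E : (0,∞) → ℝ` is the large-`R` limit of the strip energies. -/
def IsLimitE (E : ℝ → ℝ) : Prop :=
  ∀ L > 0, Tendsto (fun R => egs L R / R) atTop (nhds (E L))

/-- General energy density with potential `A` and coupling `lam`. -/
def gdens (A : ℝ × ℝ → ℝ × ℝ) (lam : ℝ) (u : ℝ × ℝ → ℂ) (x : ℝ × ℝ) : ℝ :=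
  magGradSq A u x - lam * ‖u x‖ ^ 2 + (lam / 2) * ‖u x‖ ^ 4

/-- Open square cell with lower left corner `(a, c)` and side `l`. -/
def cell (a c l : ℝ) : Set (ℝ × ℝ) := Ioo a (a + l) ×ˢ Ioo c (c + l)

/-- Linearised potential. -/
def Alin (h : ℝ) (x : ℝ × ℝ) : ℝ × ℝ := (h ^ 2 / 2 - h * x.2, 0)

lemma magGradSq_nonneg (A : ℝ × ℝ → ℝ × ℝ) (u : ℝ × ℝ → ℂ) (x : ℝ × ℝ) :
    0 ≤ magGradSq A u x := by
  unfold magGradSq; positivity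

lemma continuous_fderiv_apply' {u : ℝ × ℝ → ℂ} (hu : ContDiff ℝ 1 u) (v : ℝ × ℝ) :
    Continuous fun x => fderiv ℝ u x v :=
  (hu.continuous_fderiv (by norm_num)).clm_apply continuous_const

lemma continuous_magGradSq {A : ℝ × ℝ → ℝ × ℝ} (hA : Continuous A) {u : ℝ × ℝ → ℂ}
    (hu : ContDiff ℝ 1 u) : Continuous (magGradSq A u) := by
  unfold magGradSq
  have h1 := continuous_fderiv_apply' hu (1, 0)
  have h2 := continuous_fderiv_apply' hu (0, 1)
  have h3 := hu.continuous
  fun_prop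

lemma continuous_gdens {A : ℝ × ℝ → ℝ × ℝ} (hA : Continuous A) (lam : ℝ) {u : ℝ × ℝ → ℂ}
    (hu : ContDiff ℝ 1 u) : Continuous (gdens A lam u) := by
  unfold gdens
  have h1 := continuous_magGradSq hA hu
  have h3 := hu.continuous
  fun_prop

lemma continuous_A₀ : Continuous A₀ := by unfold A₀; fun_prop
lemma continuous_Avan : Continuous Avan := by unfold Avan; fun_prop
lemma continuous_Alin (h : ℝ) : Continuous (Alin h) := by unfold Alin; fun_prop

lemma isOpen_cell (a c l : ℝ) : IsOpen (cell a c l) := isOpen_Ioo.prod isOpen_Ioo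

lemma integrableOn_rect {f : ℝ × ℝ → ℝ} (hf : Continuous f) (a b c d : ℝ) :
    IntegrableOn f (Ioo a b ×ˢ Ioo c d) := by
  have : IntegrableOn f (Icc a b ×ˢ Icc c d) :=
    hf.continuousOn.integrableOn_compact (isCompact_Icc.prod isCompact_Icc)
  exact this.mono_set (prod_mono Ioo_subset_Icc_self Ioo_subset_Icc_self)

lemma integrableOn_cell {f : ℝ × ℝ → ℝ} (hf : Continuous f) (a c l : ℝ) :
    IntegrableOn f (cell a c l) := integrableOn_rect hf _ _ _ _

lemma volume_rect {a b c d : ℝ} (h1 : a ≤ b) (h2 : c ≤ d) :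
    volume.real (Ioo a b ×ˢ Ioo c d) = (b - a) * (d - c) := by
  rw [Measure.volume_eq_prod, measureReal_prod_prod]
  simp [h1, h2]

lemma volume_cell {a c l : ℝ} (hl : 0 ≤ l) : volume.real (cell a c l) = l ^ 2 := by
  unfold cell
  rw [volume_rect (by linarith) (by linarith)]; ring

lemma volume_cell_ne_top (a c l : ℝ) : volume (cell a c l) ≠ ⊤ := by
  unfold cell
  rw [Measure.volume_eq_prod, Measure.prod_prod]
  simp [ENNReal.mul_ne_top]

lemma integral_fderiv_zero {f : ℝ × ℝ → ℝ} (hf : ContDiff ℝ 1 f) (hc : HasCompactSupport f)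
    (v : ℝ × ℝ) : ∫ x, fderiv ℝ f x v = 0 := by
  have hfd : Continuous fun x => fderiv ℝ f x v :=
    (hf.continuous_fderiv (by norm_num)).clm_apply continuous_const
  have hInt : Integrable fun x => fderiv ℝ f x v :=
    hfd.integrable_of_hasCompactSupport (hc.fderiv_apply (𝕜 := ℝ) v)
  have := integral_mul_fderiv_eq_neg_fderiv_mul_of_integrable (μ := volume) (f := f)
    (g := fun _ => (1:ℝ)) (v := v) (by simpa using hInt) (by simp)
    (by simpa using hf.continuous.integrable_of_hasCompactSupport hc)
    (fun x _ => hf.differentiable (by norm_num) x) (fun x _ => by fun_prop)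
  simpa using this

lemma fderiv_normsq {u : ℝ × ℝ → ℂ} {x : ℝ × ℝ} (hu : DifferentiableAt ℝ u x) (v : ℝ × ℝ) :
    fderiv ℝ (fun y => ‖u y‖ ^ 2) x v = 2 * ((u x).re * (fderiv ℝ u x v).re
      + (u x).im * (fderiv ℝ u x v).im) := by
  have := hu.hasFDerivAt.norm_sq
  rw [this.fderiv]
  simp [Complex.inner]
  ring

lemma norm_sq_reim (z : ℂ) : ‖z‖ ^ 2 = z.re ^ 2 + z.im ^ 2 := by
  rw [Complex.sq_norm, Complex.normSq_apply]; ring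

/-- One-dimensional transition profile: `0` for `s ≤ 1/2`, `1` for `s ≥ 1`. -/
def psi (s : ℝ) : ℝ := Real.smoothTransition (2 * s - 1)

lemma psi_contDiff : ContDiff ℝ 2 psi := by
  unfold psi
  exact (Real.smoothTransition.contDiff (n := 2)).comp (by fun_prop)

lemma psi_nonneg (s : ℝ) : 0 ≤ psi s := Real.smoothTransition.nonneg _
lemma psi_le_one (s : ℝ) : psi s ≤ 1 := Real.smoothTransition.le_one _
lemma psi_zero {s : ℝ} (h : s ≤ 1 / 2) : psi s = 0 :=
  Real.smoothTransition.zero_of_nonpos (by linarith)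
lemma psi_one {s : ℝ} (h : 1 ≤ s) : psi s = 1 :=
  Real.smoothTransition.one_of_one_le (by linarith)

lemma psi_deriv_contDiff : ContDiff ℝ 1 (deriv psi) := by
  have := psi_contDiff
  rw [show (2 : WithTop ℕ∞) = 1 + 1 by norm_num, contDiff_succ_iff_deriv] at this
  exact this.2.2

lemma psi_deriv_compact : HasCompactSupport (deriv psi) := by
  apply HasCompactSupport.intro (K := Icc (1/2) 1) isCompact_Icc
  intro x hx
  rw [mem_Icc, not_and_or, not_le, not_le] at hx
  rcases hx with hx | hx
  · have : psi =ᶠ[𝓝 x] fun _ => 0 := by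
      filter_upwards [gt_mem_nhds hx] with y hy using psi_zero hy.le
    rw [this.deriv_eq]; simp
  · have : psi =ᶠ[𝓝 x] fun _ => 1 := by
      filter_upwards [lt_mem_nhds hx] with y hy using psi_one hy.le
    rw [this.deriv_eq]; simp

lemma psi_bounds : ∃ B > 0, (∀ s, |deriv psi s| ≤ B) ∧ ∀ s, |deriv (deriv psi) s| ≤ B := by
  obtain ⟨B1, h1⟩ := psi_deriv_contDiff.continuous.bounded_above_of_compact_support
    psi_deriv_compact
  have hc : Continuous (deriv (deriv psi)) := psi_deriv_contDiff.continuous_deriv (by norm_num)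
  obtain ⟨B2, h2⟩ := hc.bounded_above_of_compact_support psi_deriv_compact.deriv
  refine ⟨max 1 (max B1 B2), by positivity, fun s => ?_, fun s => ?_⟩
  · exact (h1 s).trans (by simp)
  · exact (h2 s).trans (by simp)

lemma eta_exists : ∃ C > 0, ∀ δ > 0, ∀ a l : ℝ, ∃ η : ℝ → ℝ, ContDiff ℝ 2 η ∧
    (∀ t, 0 ≤ η t) ∧ (∀ t, η t ≤ 1) ∧ (∀ t, η t ≠ 0 → t ∈ Icc (a + δ / 2) (a + l - δ / 2)) ∧
    (∀ t ∈ Icc (a + δ) (a + l - δ), η t = 1) ∧ (∀ t, |deriv η t| ≤ C / δ) ∧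
    (∀ t, |deriv (deriv η) t| ≤ C / δ ^ 2) := by
  obtain ⟨B, hB, h1, h2⟩ := psi_bounds
  refine ⟨2 * B + 2 * B ^ 2, by positivity, fun δ hδ a l => ?_⟩
  have hd0 : ∀ t, HasDerivAt psi (deriv psi t) t := fun t =>
    (psi_contDiff.differentiable (by norm_num) t).hasDerivAt
  have hd1 : ∀ t, HasDerivAt (deriv psi) (deriv (deriv psi) t) t := fun t =>
    (psi_deriv_contDiff.differentiable (by norm_num) t).hasDerivAt
  have ha : ∀ t : ℝ, HasDerivAt (fun t => (t - a) / δ) (1 / δ) t := fun t =>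
    ((hasDerivAt_id t).sub_const a).div_const δ
  have hb : ∀ t : ℝ, HasDerivAt (fun t => (a + l - t) / δ) (-1 / δ) t := fun t =>
    ((hasDerivAt_id t).const_sub (a + l)).div_const δ
  set η : ℝ → ℝ := fun t => psi ((t - a) / δ) * psi ((a + l - t) / δ) with hη
  have e1 : deriv η = fun t => (deriv psi ((t - a) / δ) * psi ((a + l - t) / δ)
      - psi ((t - a) / δ) * deriv psi ((a + l - t) / δ)) / δ := by
    ext t
    have := (((hd0 _).comp t (ha t)).mul ((hd0 _).comp t (hb t))).deriv
    simp only [Function.comp_def] at this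
    refine Eq.trans this ?_
    ring
  have e2 : deriv (deriv η) = fun t => (deriv (deriv psi) ((t - a) / δ) * psi ((a + l - t) / δ)
      - 2 * (deriv psi ((t - a) / δ) * deriv psi ((a + l - t) / δ))
      + psi ((t - a) / δ) * deriv (deriv psi) ((a + l - t) / δ)) / δ ^ 2 := by
    rw [e1]
    ext t
    have := (((((hd1 _).comp t (ha t)).mul ((hd0 _).comp t (hb t))).sub
      (((hd0 _).comp t (ha t)).mul ((hd1 _).comp t (hb t)))).div_const δ).deriv
    simp only [Function.comp_def] at this
    refine Eq.trans this ?_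
    field_simp
    ring
  have hp : ∀ s, |psi s| ≤ 1 := fun s => by
    rw [abs_of_nonneg (psi_nonneg s)]; exact psi_le_one s
  have hmul : ∀ {x y X Y : ℝ}, |x| ≤ X → |y| ≤ Y → |x * y| ≤ X * Y := fun {x y X Y} hx hy => by
    rw [abs_mul]; exact mul_le_mul hx hy (abs_nonneg _) ((abs_nonneg _).trans hx)
  refine ⟨η, ?_, fun t => mul_nonneg (psi_nonneg _) (psi_nonneg _),
    fun t => mul_le_one₀ (psi_le_one _) (psi_nonneg _) (psi_le_one _), ?_, ?_, ?_, ?_⟩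
  · exact (psi_contDiff.comp (by fun_prop)).mul (psi_contDiff.comp (by fun_prop))
  · intro t ht
    rw [hη] at ht
    have h3 := left_ne_zero_of_mul ht
    have h4 := right_ne_zero_of_mul ht
    have h5 : 1 / 2 < (t - a) / δ := by
      by_contra h; exact h3 (psi_zero (not_lt.mp h))
    have h6 : 1 / 2 < (a + l - t) / δ := by
      by_contra h; exact h4 (psi_zero (not_lt.mp h))
    rw [lt_div_iff₀ hδ] at h5 h6
    constructor <;> linarith
  · intro t ht
    have h5 : 1 ≤ (t - a) / δ := by rw [le_div_iff₀ hδ]; linarith [ht.1]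
    have h6 : 1 ≤ (a + l - t) / δ := by rw [le_div_iff₀ hδ]; linarith [ht.2]
    simp [hη, psi_one h5, psi_one h6]
  · intro t
    rw [e1]
    simp only
    rw [abs_div, abs_of_pos hδ]
    gcongr
    have i1 := hmul (h1 ((t - a) / δ)) (hp ((a + l - t) / δ))
    have i2 := hmul (hp ((t - a) / δ)) (h1 ((a + l - t) / δ))
    refine (abs_sub _ _).trans ?_
    nlinarith [sq_nonneg B]
  · intro t
    rw [e2]
    simp only
    rw [abs_div, abs_of_pos (pow_pos hδ 2)]
    gcongr
    have i1 := hmul (h2 ((t - a) / δ)) (hp ((a + l - t) / δ))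
    have i2 := hmul (hp ((t - a) / δ)) (h2 ((a + l - t) / δ))
    have i3 := hmul (h1 ((t - a) / δ)) (h1 ((a + l - t) / δ))
    rw [abs_le] at *
    constructor <;> nlinarith

lemma fderiv_fst_comp {f : ℝ → ℝ} {x : ℝ × ℝ} (hf : DifferentiableAt ℝ f x.1) :
    HasFDerivAt (fun y : ℝ × ℝ => f y.1) (deriv f x.1 • ContinuousLinearMap.fst ℝ ℝ ℝ) x :=
  hf.hasDerivAt.comp_hasFDerivAt x hasFDerivAt_fst

lemma fderiv_snd_comp {f : ℝ → ℝ} {x : ℝ × ℝ} (hf : DifferentiableAt ℝ f x.2) :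
    HasFDerivAt (fun y : ℝ × ℝ => f y.2) (deriv f x.2 • ContinuousLinearMap.snd ℝ ℝ ℝ) x :=
  hf.hasDerivAt.comp_hasFDerivAt x hasFDerivAt_snd

lemma contDiff_normsq {u : ℝ × ℝ → ℂ} (hu : ContDiff ℝ 1 u) : ContDiff ℝ 1 fun y => ‖u y‖ ^ 2 :=
  hu.norm_sq ℝ

/-- `x`-component of the divergence field. -/
def W1 (η ζ : ℝ → ℝ) (u : ℝ × ℝ → ℂ) (y : ℝ × ℝ) : ℝ :=
  (η y.1 * deriv η y.1) * (ζ y.2) ^ 2 * ‖u y‖ ^ 2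

/-- `y`-component of the divergence field. -/
def W2 (η ζ : ℝ → ℝ) (u : ℝ × ℝ → ℂ) (y : ℝ × ℝ) : ℝ :=
  (η y.1) ^ 2 * (ζ y.2 * deriv ζ y.2) * ‖u y‖ ^ 2

lemma deriv_contDiff_one {η : ℝ → ℝ} (h : ContDiff ℝ 2 η) : ContDiff ℝ 1 (deriv η) := by
  rw [show (2 : WithTop ℕ∞) = 1 + 1 by norm_num, contDiff_succ_iff_deriv] at h
  exact h.2.2

lemma W1_contDiff {η ζ : ℝ → ℝ} (hη : ContDiff ℝ 2 η) (hζ : ContDiff ℝ 2 ζ)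
    {u : ℝ × ℝ → ℂ} (hu : ContDiff ℝ 1 u) : ContDiff ℝ 1 (W1 η ζ u) := by
  have h1 := deriv_contDiff_one hη
  have h2 : ContDiff ℝ 1 η := hη.of_le (by norm_num)
  have h3 : ContDiff ℝ 1 ζ := hζ.of_le (by norm_num)
  exact (((h2.comp contDiff_fst).mul (h1.comp contDiff_fst)).mul
    ((h3.comp contDiff_snd).pow 2)).mul (contDiff_normsq hu)

lemma W2_contDiff {η ζ : ℝ → ℝ} (hη : ContDiff ℝ 2 η) (hζ : ContDiff ℝ 2 ζ)
    {u : ℝ × ℝ → ℂ} (hu : ContDiff ℝ 1 u) : ContDiff ℝ 1 (W2 η ζ u) := by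
  have h1 := deriv_contDiff_one hζ
  have h2 : ContDiff ℝ 1 η := hη.of_le (by norm_num)
  have h3 : ContDiff ℝ 1 ζ := hζ.of_le (by norm_num)
  exact (((h2.comp contDiff_fst).pow 2).mul ((h3.comp contDiff_snd).mul
    (h1.comp contDiff_snd))).mul (contDiff_normsq hu)

lemma cutoff_pointwise {η ζ : ℝ → ℝ} (hη : ContDiff ℝ 2 η) (hζ : ContDiff ℝ 2 ζ)
    {u : ℝ × ℝ → ℂ} (hu : ContDiff ℝ 1 u) (A : ℝ × ℝ → ℝ × ℝ) (x : ℝ × ℝ) :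
    magGradSq A (fun y => ((η y.1 * ζ y.2 : ℝ) : ℂ) * u y) x =
      (η x.1 * ζ x.2) ^ 2 * magGradSq A u x + fderiv ℝ (W1 η ζ u) x (1, 0)
      + fderiv ℝ (W2 η ζ u) x (0, 1)
      - (η x.1 * ζ x.2) * (deriv (deriv η) x.1 * ζ x.2 + η x.1 * deriv (deriv ζ) x.2)
        * ‖u x‖ ^ 2 := by
  have hη0 : DifferentiableAt ℝ η x.1 := hη.differentiable (by norm_num) _
  have hζ0 : DifferentiableAt ℝ ζ x.2 := hζ.differentiable (by norm_num) _
  have hη1 : DifferentiableAt ℝ (deriv η) x.1 :=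
    (deriv_contDiff_one hη).differentiable (by norm_num) _
  have hζ1 : DifferentiableAt ℝ (deriv ζ) x.2 :=
    (deriv_contDiff_one hζ).differentiable (by norm_num) _
  have hu0 : DifferentiableAt ℝ u x := hu.differentiable (by norm_num) _
  have hn : HasFDerivAt (fun y => ‖u y‖ ^ 2) (fderiv ℝ (fun y => ‖u y‖ ^ 2) x) x :=
    ((contDiff_normsq hu).differentiable (by norm_num) x).hasFDerivAt
  have hχ := (fderiv_fst_comp hη0).mul (fderiv_snd_comp hζ0)
  have hχc := (Complex.ofRealCLM.hasFDerivAt.comp x hχ).mul hu0.hasFDerivAt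
  have hw1 := ((((fderiv_fst_comp hη0).mul (fderiv_fst_comp hη1)).mul
    ((fderiv_snd_comp hζ0).pow 2)).mul hn).fderiv
  have hw2 := ((((fderiv_fst_comp hη0).pow 2).mul ((fderiv_snd_comp hζ0).mul
    (fderiv_snd_comp hζ1))).mul hn).fderiv
  have E1 : fderiv ℝ (W1 η ζ u) x (1, 0) =
      ((deriv η x.1) ^ 2 + η x.1 * deriv (deriv η) x.1) * ζ x.2 ^ 2 * ‖u x‖ ^ 2
      + (η x.1 * deriv η x.1) * ζ x.2 ^ 2 * fderiv ℝ (fun y => ‖u y‖ ^ 2) x (1, 0) := by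
    have := congrArg (fun T => T (1, 0)) hw1
    refine Eq.trans this ?_
    simp
    ring
  have E2 : fderiv ℝ (W2 η ζ u) x (0, 1) =
      ((deriv ζ x.2) ^ 2 + ζ x.2 * deriv (deriv ζ) x.2) * η x.1 ^ 2 * ‖u x‖ ^ 2
      + (ζ x.2 * deriv ζ x.2) * η x.1 ^ 2 * fderiv ℝ (fun y => ‖u y‖ ^ 2) x (0, 1) := by
    have := congrArg (fun T => T (0, 1)) hw2
    refine Eq.trans this ?_
    simp
    ring
  have E3 : fderiv ℝ (fun y : ℝ × ℝ => ((η y.1 * ζ y.2 : ℝ) : ℂ) * u y) x (1, 0) =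
      ((η x.1 * ζ x.2 : ℝ) : ℂ) * fderiv ℝ u x (1, 0)
        + ((deriv η x.1 * ζ x.2 : ℝ) : ℂ) * u x := by
    have := congrArg (fun T => T (1, 0)) hχc.fderiv
    refine Eq.trans this ?_
    simp
    ring
  have E4 : fderiv ℝ (fun y : ℝ × ℝ => ((η y.1 * ζ y.2 : ℝ) : ℂ) * u y) x (0, 1) =
      ((η x.1 * ζ x.2 : ℝ) : ℂ) * fderiv ℝ u x (0, 1)
        + ((η x.1 * deriv ζ x.2 : ℝ) : ℂ) * u x := by
    have := congrArg (fun T => T (0, 1)) hχc.fderiv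
    refine Eq.trans this ?_
    simp
    ring
  unfold magGradSq
  rw [E1, E2, E3, E4, fderiv_normsq hu0, fderiv_normsq hu0]
  dsimp only
  generalize fderiv ℝ u x (1, 0) = d1
  generalize fderiv ℝ u x (0, 1) = d2
  generalize (A x).1 = a1
  generalize (A x).2 = a2
  generalize u x = w
  simp only [norm_sq_reim, Complex.add_re, Complex.sub_re, Complex.mul_re, Complex.I_re,
    Complex.I_im, Complex.ofReal_re, Complex.ofReal_im, Complex.add_im, Complex.sub_im,
    Complex.mul_im]
  ring

set_option maxHeartbeats 1600000 in
lemma cutoff_energy : ∃ C > 0, ∀ lam ≥ (4:ℝ), ∀ a c l : ℝ, 1 ≤ l → l ≤ 2 →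
    ∀ u : ℝ × ℝ → ℂ, ContDiff ℝ 1 u → (∀ x, ‖u x‖ ≤ 1) → ∀ A : ℝ × ℝ → ℝ × ℝ, Continuous A →
    ∃ v : ℝ × ℝ → ℂ, ContDiff ℝ 1 v ∧ HasCompactSupport v ∧ tsupport v ⊆ cell a c l ∧
      (∀ x, ‖v x‖ ≤ 1) ∧
      ∫ x in cell a c l, gdens A lam v x ≤ (∫ x in cell a c l, gdens A lam u x) + C * √lam := by
  obtain ⟨C, hC, H⟩ := eta_exists
  refine ⟨8 * (1 + 2 * C), by positivity, fun lam hlam a c l hl1 hl2 u hu hu1 A hA => ?_⟩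
  set δ : ℝ := 1 / √lam with hδ
  have hs2 : 2 ≤ √lam := by
    rw [show (2:ℝ) = √4 by rw [show (4:ℝ) = 2 ^ 2 by norm_num, Real.sqrt_sq (by norm_num)]]
    exact Real.sqrt_le_sqrt hlam
  have hδ0 : 0 < δ := by positivity
  have hδ2 : δ ≤ 1 / 2 := by rw [hδ]; gcongr
  obtain ⟨η, hη, hη0, hη1, hηs, hηi, hηd, hηdd⟩ := H δ hδ0 a l
  obtain ⟨ζ, hζ, hζ0, hζ1, hζs, hζi, hζd, hζdd⟩ := H δ hδ0 c l
  set v : ℝ × ℝ → ℂ := fun y => ((η y.1 * ζ y.2 : ℝ) : ℂ) * u y with hv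
  set K' : Set (ℝ × ℝ) := Icc (a + δ / 2) (a + l - δ / 2) ×ˢ Icc (c + δ / 2) (c + l - δ / 2)
    with hK'
  have hK'c : IsCompact K' := isCompact_Icc.prod isCompact_Icc
  have hK'K : K' ⊆ cell a c l := by
    rintro x ⟨⟨h1, h2⟩, ⟨h3, h4⟩⟩
    refine ⟨⟨?_, ?_⟩, ⟨?_, ?_⟩⟩ <;> linarith
  have hsupp : ∀ x, x ∉ K' → η x.1 * ζ x.2 = 0 := by
    intro x hx
    by_contra h
    exact hx ⟨hηs _ (left_ne_zero_of_mul h), hζs _ (right_ne_zero_of_mul h)⟩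
  have hvC : ContDiff ℝ 1 v := by
    have h2 : ContDiff ℝ 1 η := hη.of_le (by norm_num)
    have h3 : ContDiff ℝ 1 ζ := hζ.of_le (by norm_num)
    exact (Complex.ofRealCLM.contDiff.comp
      ((h2.comp contDiff_fst).mul (h3.comp contDiff_snd))).mul hu
  have hvs : ∀ x, x ∉ K' → v x = 0 := fun x hx => by
    simp only [hv]; rw [hsupp x hx]; simp
  have hts : ∀ {E : Type} [NormedAddCommGroup E] (f : ℝ × ℝ → E), (∀ x, x ∉ K' → f x = 0) →
      tsupport f ⊆ K' := fun f hf =>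
    closure_minimal (fun x hx => by by_contra h; exact hx (hf x h)) hK'c.isClosed
  have hW1s : ∀ x, x ∉ K' → W1 η ζ u x = 0 := fun x hx => by
    have : W1 η ζ u x = (η x.1 * ζ x.2) * (deriv η x.1 * ζ x.2 * ‖u x‖ ^ 2) := by
      unfold W1; ring
    rw [this, hsupp x hx, zero_mul]
  have hW2s : ∀ x, x ∉ K' → W2 η ζ u x = 0 := fun x hx => by
    have : W2 η ζ u x = (η x.1 * ζ x.2) * (deriv ζ x.2 * η x.1 * ‖u x‖ ^ 2) := by
      unfold W2; ring
    rw [this, hsupp x hx, zero_mul]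
  have hχ0 : ∀ x : ℝ × ℝ, 0 ≤ η x.1 * ζ x.2 := fun x => mul_nonneg (hη0 _) (hζ0 _)
  have hχ1 : ∀ x : ℝ × ℝ, η x.1 * ζ x.2 ≤ 1 := fun x => mul_le_one₀ (hη1 _) (hζ0 _) (hζ1 _)
  have hvn : ∀ x, ‖v x‖ = (η x.1 * ζ x.2) * ‖u x‖ := fun x => by
    simp only [hv]; rw [norm_mul, Complex.norm_real, Real.norm_of_nonneg (hχ0 x)]
  refine ⟨v, hvC, HasCompactSupport.intro hK'c hvs, (hts v hvs).trans hK'K, fun x => ?_, ?_⟩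
  · rw [hvn]; exact mul_le_one₀ (hχ1 x) (norm_nonneg _) (hu1 x)
  -- inner cell
  set I : Set (ℝ × ℝ) := Ioo (a + δ) (a + l - δ) ×ˢ Ioo (c + δ) (c + l - δ) with hI
  have hIm : MeasurableSet I := (measurableSet_Ioo).prod measurableSet_Ioo
  have hIK : I ⊆ cell a c l := by
    rintro x ⟨⟨h1, h2⟩, ⟨h3, h4⟩⟩
    refine ⟨⟨?_, ?_⟩, ⟨?_, ?_⟩⟩ <;> linarith
  set E : ℝ := (1 + 2 * C) * lam with hE
  have hlamδ : 1 / δ ^ 2 = lam := by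
    rw [hδ]; rw [div_pow, Real.sq_sqrt (by linarith)]; simp
  set D1 : ℝ × ℝ → ℝ := fun x => fderiv ℝ (W1 η ζ u) x (1, 0)
  set D2 : ℝ × ℝ → ℝ := fun x => fderiv ℝ (W2 η ζ u) x (0, 1)
  have hcW1 : HasCompactSupport (W1 η ζ u) := HasCompactSupport.intro hK'c hW1s
  have hcW2 : HasCompactSupport (W2 η ζ u) := HasCompactSupport.intro hK'c hW2s
  have hD1c : Continuous D1 :=
    ((W1_contDiff hη hζ hu).continuous_fderiv (by norm_num)).clm_apply continuous_const
  have hD2c : Continuous D2 :=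
    ((W2_contDiff hη hζ hu).continuous_fderiv (by norm_num)).clm_apply continuous_const
  have hD1z : ∫ x in cell a c l, D1 x = 0 := by
    rw [setIntegral_eq_integral_of_forall_compl_eq_zero]
    · exact integral_fderiv_zero (W1_contDiff hη hζ hu) hcW1 _
    · intro x hx
      have : x ∉ tsupport (W1 η ζ u) := fun h => hx (hK'K (hts _ hW1s h))
      simp only [D1]
      rw [fderiv_of_notMem_tsupport ℝ this]; simp
  have hD2z : ∫ x in cell a c l, D2 x = 0 := by
    rw [setIntegral_eq_integral_of_forall_compl_eq_zero]
    · exact integral_fderiv_zero (W2_contDiff hη hζ hu) hcW2 _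
    · intro x hx
      have : x ∉ tsupport (W2 η ζ u) := fun h => hx (hK'K (hts _ hW2s h))
      simp only [D2]
      rw [fderiv_of_notMem_tsupport ℝ this]; simp
  have hpt : ∀ x ∈ cell a c l, gdens A lam v x ≤
      gdens A lam u x + D1 x + D2 x + (cell a c l \ I).indicator (fun _ => E) x := by
    intro x hx
    have h1 := cutoff_pointwise hη hζ hu A x
    have h2 := magGradSq_nonneg A u x
    have hu2 : ‖u x‖ ^ 2 ≤ 1 := by nlinarith [hu1 x, norm_nonneg (u x)]
    have hu20 : 0 ≤ ‖u x‖ ^ 2 := by positivity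
    have hu4 : 0 ≤ ‖u x‖ ^ 4 := by positivity
    have hc0 := hχ0 x
    have hc1 := hχ1 x
    have hcsq : (η x.1 * ζ x.2) ^ 2 ≤ 1 := by nlinarith
    have hc4 : (η x.1 * ζ x.2) ^ 4 ≤ 1 := pow_le_one₀ hc0 hc1
    have hcsq0 : 0 ≤ (η x.1 * ζ x.2) ^ 2 := by positivity
    have hm : (η x.1 * ζ x.2) ^ 2 * magGradSq A u x ≤ magGradSq A u x := by nlinarith
    have hq : (η x.1 * ζ x.2) ^ 4 * ‖u x‖ ^ 4 ≤ ‖u x‖ ^ 4 := by nlinarith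
    have key : lam * (1 - (η x.1 * ζ x.2) ^ 2) * ‖u x‖ ^ 2 -
        (η x.1 * ζ x.2) * (deriv (deriv η) x.1 * ζ x.2 + η x.1 * deriv (deriv ζ) x.2)
        * ‖u x‖ ^ 2 ≤ (cell a c l \ I).indicator (fun _ => E) x := by
      by_cases hxI : x ∈ I
      · rw [indicator_of_notMem (fun h => h.2 hxI)]
        have a1 : η x.1 = 1 := hηi _ ⟨hxI.1.1.le, hxI.1.2.le⟩
        have a2 : ζ x.2 = 1 := hζi _ ⟨hxI.2.1.le, hxI.2.2.le⟩
        have dd : ∀ (f : ℝ → ℝ) (p q t : ℝ), (∀ s ∈ Icc p q, f s = 1) → t ∈ Ioo p q →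
            deriv (deriv f) t = 0 := by
          intro f p q t hf ht
          have e1 : f =ᶠ[𝓝 t] fun _ => 1 := by
            filter_upwards [Ioo_mem_nhds ht.1 ht.2] with s hs using hf s ⟨hs.1.le, hs.2.le⟩
          have e2 := e1.deriv
          rw [e2.deriv_eq]; simp
        rw [dd η _ _ _ hηi hxI.1, dd ζ _ _ _ hζi hxI.2, a1, a2]
        simp
      · rw [indicator_of_mem (show x ∈ cell a c l \ I from ⟨hx, hxI⟩)]
        have b1 : |deriv (deriv η) x.1 * ζ x.2| ≤ C * lam := by
          rw [abs_mul, abs_of_nonneg (hζ0 _)]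
          have := hηdd x.1
          rw [div_eq_mul_one_div, hlamδ] at this
          nlinarith [hζ0 x.2, hζ1 x.2, abs_nonneg (deriv (deriv η) x.1)]
        have b2 : |η x.1 * deriv (deriv ζ) x.2| ≤ C * lam := by
          rw [abs_mul, abs_of_nonneg (hη0 _)]
          have := hζdd x.2
          rw [div_eq_mul_one_div, hlamδ] at this
          nlinarith [hη0 x.1, hη1 x.1, abs_nonneg (deriv (deriv ζ) x.2)]
        have b3 : |(η x.1 * ζ x.2) * (deriv (deriv η) x.1 * ζ x.2 + η x.1 * deriv (deriv ζ) x.2)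
            * ‖u x‖ ^ 2| ≤ 2 * C * lam := by
          rw [abs_mul, abs_mul, abs_of_nonneg hc0, abs_of_nonneg hu20]
          have b4 := abs_add_le (deriv (deriv η) x.1 * ζ x.2) (η x.1 * deriv (deriv ζ) x.2)
          have b5 := abs_nonneg (deriv (deriv η) x.1 * ζ x.2 + η x.1 * deriv (deriv ζ) x.2)
          have b6 : η x.1 * ζ x.2 *
            |deriv (deriv η) x.1 * ζ x.2 + η x.1 * deriv (deriv ζ) x.2| ≤ 2 * C * lam := by
            nlinarith
          have b7 : 0 ≤ η x.1 * ζ x.2 *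
            |deriv (deriv η) x.1 * ζ x.2 + η x.1 * deriv (deriv ζ) x.2| := by positivity
          nlinarith
        have b8 := neg_abs_le ((η x.1 * ζ x.2) *
          (deriv (deriv η) x.1 * ζ x.2 + η x.1 * deriv (deriv ζ) x.2) * ‖u x‖ ^ 2)
        have b9 : (1 - (η x.1 * ζ x.2) ^ 2) * ‖u x‖ ^ 2 ≤ 1 := by nlinarith
        rw [hE]
        nlinarith
    unfold gdens
    rw [h1, hvn]
    simp only [D1, D2]
    nlinarith
  have i1 : IntegrableOn (gdens A lam v) (cell a c l) := integrableOn_cell (continuous_gdens hA lam hvC) _ _ _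
  have i2 : IntegrableOn (gdens A lam u) (cell a c l) := integrableOn_cell (continuous_gdens hA lam hu) _ _ _
  have i3 : IntegrableOn D1 (cell a c l) := integrableOn_cell hD1c _ _ _
  have i4 : IntegrableOn D2 (cell a c l) := integrableOn_cell hD2c _ _ _
  have hcm : MeasurableSet (cell a c l) := (isOpen_cell a c l).measurableSet
  have i5 : IntegrableOn ((cell a c l \ I).indicator (fun _ => E)) (cell a c l) := by
    apply Integrable.indicator _ (hcm.diff hIm)
    apply integrableOn_const (volume_cell_ne_top a c l)
  have i24 : ∫ x in cell a c l, (gdens A lam u x + D1 x + D2 x) = ∫ x in cell a c l, gdens A lam u x := by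
    have i23 : IntegrableOn (fun x => gdens A lam u x + D1 x) (cell a c l) := i2.add i3
    rw [integral_add i23 i4, integral_add i2 i3, hD1z, hD2z]; ring
  have i6 : ∫ x in cell a c l, (cell a c l \ I).indicator (fun _ => E) x ≤ 8 * (1 + 2 * C) * √lam := by
    rw [setIntegral_indicator (hcm.diff hIm), setIntegral_const]
    rw [show cell a c l ∩ (cell a c l \ I) = cell a c l \ I by
      ext; simp]
    rw [measureReal_sdiff hIK hIm (volume_cell_ne_top a c l), volume_cell (by linarith), hI, volume_rect (by linarith) (by linarith),
      smul_eq_mul, hE]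
    have : l ^ 2 - (a + l - δ - (a + δ)) * (c + l - δ - (c + δ)) ≤ 8 * δ := by nlinarith
    have h8 : δ * lam = √lam := by
      rw [hδ]
      have := Real.mul_self_sqrt (show 0 ≤ lam by linarith)
      field_simp
      nlinarith
    calc _ ≤ 8 * δ * ((1 + 2 * C) * lam) := by gcongr
      _ = 8 * (1 + 2 * C) * (δ * lam) := by ring
      _ = _ := by rw [h8]
  calc ∫ x in cell a c l, gdens A lam v x ≤ ∫ x in cell a c l, (gdens A lam u x + D1 x + D2 x +
        (cell a c l \ I).indicator (fun _ => E) x) :=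
        setIntegral_mono_on i1 (((i2.add i3).add i4).add i5) hcm hpt
    _ = (∫ x in cell a c l, (gdens A lam u x + D1 x + D2 x)) + ∫ x in cell a c l,
        (cell a c l \ I).indicator (fun _ => E) x := integral_add ((i2.add i3).add i4) i5
    _ ≤ _ := by rw [i24]; gcongr

lemma slope_tendsto {q k : ℝ × ℝ → ℝ} (hq : ContDiff ℝ 1 q) (hqc : HasCompactSupport q)
    (hk : Integrable k) (e : ℝ × ℝ) :
    Tendsto (fun t : ℝ => ∫ x, (t⁻¹ * (q (x + t • e) - q x)) * k x) (𝓝[≠] 0)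
      (𝓝 (∫ x, fderiv ℝ q x e * k x)) := by
  obtain ⟨K, hK⟩ := hq.lipschitzWith_of_hasCompactSupport hqc (by norm_num)
  apply tendsto_integral_filter_of_dominated_convergence (fun x => (K * ‖e‖) * ‖k x‖)
  · refine Eventually.of_forall fun t => ?_
    apply AEStronglyMeasurable.mul _ hk.aestronglyMeasurable
    have := hq.continuous
    exact Continuous.aestronglyMeasurable (by fun_prop)
  · filter_upwards [self_mem_nhdsWithin] with t ht
    refine Eventually.of_forall fun x => ?_
    rw [norm_mul]
    gcongr
    rw [norm_mul, norm_inv]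
    have h1 := hK.norm_sub_le (x + t • e) x
    rw [add_sub_cancel_left, norm_smul] at h1
    have h2 : 0 < ‖t‖ := norm_pos_iff.mpr ht
    rw [inv_mul_le_iff₀ h2]
    linarith
  · exact (hk.norm).const_mul _
  · refine Eventually.of_forall fun x => ?_
    apply Tendsto.mul_const
    have := ((hq.differentiable (by norm_num) x).hasFDerivAt.hasLineDerivAt e).tendsto_slope_zero
    simpa using this

lemma slope_parts {p q : ℝ × ℝ → ℝ} (hp : ContDiff ℝ 1 p) (hpc : HasCompactSupport p)
    (hq : ContDiff ℝ 1 q) (hqc : HasCompactSupport q) (e f : ℝ × ℝ) (t : ℝ) :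
    ∫ x, (t⁻¹ * (q (x + t • e) - q x)) * fderiv ℝ p x f =
      ∫ x, ((-t)⁻¹ * (p (x + (-t) • e) - p x)) * fderiv ℝ q x f := by
  have cp := hp.continuous
  have cq := hq.continuous
  have cdp : Continuous fun x => fderiv ℝ p x f :=
    (hp.continuous_fderiv (by norm_num)).clm_apply continuous_const
  have cdq : Continuous fun x => fderiv ℝ q x f :=
    (hq.continuous_fderiv (by norm_num)).clm_apply continuous_const
  have sdp : HasCompactSupport fun x => fderiv ℝ p x f := hpc.fderiv_apply (𝕜 := ℝ) f
  have sdq : HasCompactSupport fun x => fderiv ℝ q x f := hqc.fderiv_apply (𝕜 := ℝ) f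
  have hder : ∀ x, fderiv ℝ (fun x => t⁻¹ * (q (x + t • e) - q x)) x f =
      t⁻¹ * (fderiv ℝ q (x + t • e) f - fderiv ℝ q x f) := by
    intro x
    have h1 : HasFDerivAt (fun x => q (x + t • e)) (fderiv ℝ q (x + t • e)) x :=
      (hasFDerivAt_comp_add_right (t • e)).mpr
        (hq.differentiable (by norm_num) (x + t • e)).hasFDerivAt
    have h2 := ((h1.sub (hq.differentiable (by norm_num) x).hasFDerivAt).const_mul t⁻¹).fderiv
    have := congrArg (fun T => T f) h2
    simpa using this
  have hd : Differentiable ℝ (fun x => t⁻¹ * (q (x + t • e) - q x)) := by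
    have := hq.differentiable (by norm_num)
    fun_prop
  rw [integral_mul_fderiv_eq_neg_fderiv_mul_of_integrable (μ := volume)
    (f := fun x => t⁻¹ * (q (x + t • e) - q x)) (g := p) (v := f)]
  rotate_left
  · simp only [hder]
    exact Continuous.integrable_of_hasCompactSupport (by fun_prop) hpc.mul_left
  · exact Continuous.integrable_of_hasCompactSupport (by fun_prop) sdp.mul_left
  · exact Continuous.integrable_of_hasCompactSupport (by fun_prop) hpc.mul_left
  · exact fun x _ => hd x
  · exact fun x _ => hp.differentiable (by norm_num) x
  simp only [hder]
  have i1 : Integrable fun x => fderiv ℝ q (x + t • e) f * p x :=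
    Continuous.integrable_of_hasCompactSupport (by fun_prop) hpc.mul_left
  have i2 : Integrable fun x => fderiv ℝ q x f * p x :=
    Continuous.integrable_of_hasCompactSupport (by fun_prop) hpc.mul_left
  have i3 : Integrable fun x => fderiv ℝ q x f * p (x + (-t) • e) :=
    Continuous.integrable_of_hasCompactSupport (by fun_prop) sdq.mul_right
  have e1 : ∫ x, t⁻¹ * (fderiv ℝ q (x + t • e) f - fderiv ℝ q x f) * p x =
      t⁻¹ * ((∫ x, fderiv ℝ q (x + t • e) f * p x) - ∫ x, fderiv ℝ q x f * p x) := by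
    rw [← integral_sub i1 i2, ← integral_const_mul]
    congr 1; ext x; ring
  have e2 : ∫ x, ((-t)⁻¹ * (p (x + (-t) • e) - p x)) * fderiv ℝ q x f =
      (-t)⁻¹ * ((∫ x, fderiv ℝ q x f * p (x + (-t) • e)) - ∫ x, fderiv ℝ q x f * p x) := by
    rw [← integral_sub i3 i2, ← integral_const_mul]
    congr 1; ext x; ring
  have e3 : ∫ x, fderiv ℝ q (x + t • e) f * p x = ∫ x, fderiv ℝ q x f * p (x + (-t) • e) := by
    rw [← integral_add_right_eq_self (fun x => fderiv ℝ q x f * p (x + (-t) • e)) (t • e)]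
    congr 1; ext x; congr 2; simp
  rw [e1, e2, e3, inv_neg]
  ring

lemma integral_jac {p q : ℝ × ℝ → ℝ} (hp : ContDiff ℝ 1 p) (hpc : HasCompactSupport p)
    (hq : ContDiff ℝ 1 q) (hqc : HasCompactSupport q) (e f : ℝ × ℝ) :
    ∫ x, fderiv ℝ q x e * fderiv ℝ p x f = ∫ x, fderiv ℝ p x e * fderiv ℝ q x f := by
  have cdp : Continuous fun x => fderiv ℝ p x f :=
    (hp.continuous_fderiv (by norm_num)).clm_apply continuous_const
  have cdq : Continuous fun x => fderiv ℝ q x f :=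
    (hq.continuous_fderiv (by norm_num)).clm_apply continuous_const
  have h1 := slope_tendsto hq hqc
    (cdp.integrable_of_hasCompactSupport (hpc.fderiv_apply (𝕜 := ℝ) f)) e
  have h2 := slope_tendsto hp hpc
    (cdq.integrable_of_hasCompactSupport (hqc.fderiv_apply (𝕜 := ℝ) f)) e
  have h3 : Tendsto (fun t : ℝ => -t) (𝓝[≠] 0) (𝓝[≠] 0) := by
    have : Tendsto (fun t : ℝ => -t) (𝓝[≠] 0) (𝓝 0) :=
      tendsto_nhdsWithin_of_tendsto_nhds (by simpa using (continuous_neg (G := ℝ)).tendsto 0)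
    refine tendsto_nhdsWithin_iff.mpr ⟨this, ?_⟩
    filter_upwards [self_mem_nhdsWithin] with t ht
    simpa using ht
  have h4 := h2.comp h3
  refine tendsto_nhds_unique h1 (h4.congr fun t => ?_)
  exact (slope_parts hp hpc hq hqc e f t).symm

lemma mag_lower {v : ℝ × ℝ → ℂ} (hv : ContDiff ℝ 1 v) (hvc : HasCompactSupport v) (h : ℝ) :
    h * ∫ x, ‖v x‖ ^ 2 ≤ ∫ x, magGradSq (Alin h) v x := by
  set p : ℝ × ℝ → ℝ := fun x => (v x).re with hpdef
  set q : ℝ × ℝ → ℝ := fun x => (v x).im with hqdef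
  have hp : ContDiff ℝ 1 p := Complex.reCLM.contDiff.comp hv
  have hq : ContDiff ℝ 1 q := Complex.imCLM.contDiff.comp hv
  have hpc : HasCompactSupport p := hvc.comp_left (g := Complex.re) rfl
  have hqc : HasCompactSupport q := hvc.comp_left (g := Complex.im) rfl
  have dp : ∀ x e, fderiv ℝ p x e = (fderiv ℝ v x e).re := fun x e => by
    have := (Complex.reCLM.hasFDerivAt.comp x (hv.differentiable (by norm_num) x).hasFDerivAt).fderiv
    exact congrArg (fun T => T e) this
  have dq : ∀ x e, fderiv ℝ q x e = (fderiv ℝ v x e).im := fun x e => by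
    have := (Complex.imCLM.hasFDerivAt.comp x (hv.differentiable (by norm_num) x).hasFDerivAt).fderiv
    exact congrArg (fun T => T e) this
  have cdp : ∀ f, Continuous fun x => fderiv ℝ p x f := fun f =>
    (hp.continuous_fderiv (by norm_num)).clm_apply continuous_const
  have cdq : ∀ f, Continuous fun x => fderiv ℝ q x f := fun f =>
    (hq.continuous_fderiv (by norm_num)).clm_apply continuous_const
  have sdp : ∀ f, HasCompactSupport fun x => fderiv ℝ p x f := fun f => hpc.fderiv_apply (𝕜 := ℝ) f
  have sdq : ∀ f, HasCompactSupport fun x => fderiv ℝ q x f := fun f => hqc.fderiv_apply (𝕜 := ℝ) f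
  set V : ℝ × ℝ → ℝ := fun x => (h ^ 2 / 2 - h * x.2) * ‖v x‖ ^ 2 with hV
  have hns : HasCompactSupport fun x => ‖v x‖ ^ 2 :=
    hvc.comp_left (g := fun z : ℂ => ‖z‖ ^ 2) (by simp)
  have hVC : ContDiff ℝ 1 V := ContDiff.mul (by fun_prop) (contDiff_normsq hv)
  have hVc : HasCompactSupport V := hns.mul_left
  have hVd : ∀ x, fderiv ℝ V x (0, 1) = (h ^ 2 / 2 - h * x.2) *
      fderiv ℝ (fun y => ‖v y‖ ^ 2) x (0, 1) - h * ‖v x‖ ^ 2 := by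
    intro x
    have hn : HasFDerivAt (fun y => ‖v y‖ ^ 2) (fderiv ℝ (fun y => ‖v y‖ ^ 2) x) x :=
      ((contDiff_normsq hv).differentiable (by norm_num) x).hasFDerivAt
    have hl : HasFDerivAt (fun y : ℝ × ℝ => h ^ 2 / 2 - h * y.2)
        (-(h • ContinuousLinearMap.snd ℝ ℝ ℝ)) x :=
      ((hasFDerivAt_snd (𝕜 := ℝ) (p := x)).const_mul h).const_sub _
    have := congrArg (fun T => T (0, 1)) (hl.mul hn).fderiv
    refine Eq.trans this ?_
    simp
    ring
  have hpt : ∀ x, h * ‖v x‖ ^ 2 + fderiv ℝ V x (0, 1) - 2 * (fderiv ℝ q x (1, 0) * fderiv ℝ p x (0, 1))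
      + 2 * (fderiv ℝ p x (1, 0) * fderiv ℝ q x (0, 1)) ≤ magGradSq (Alin h) v x := by
    intro x
    rw [hVd, dp, dq, dp, dq, fderiv_normsq (hv.differentiable (by norm_num) x)]
    unfold magGradSq Alin
    dsimp only
    generalize fderiv ℝ v x (1, 0) = d1
    generalize fderiv ℝ v x (0, 1) = d2
    generalize h ^ 2 / 2 - h * x.2 = α
    generalize v x = w
    simp only [norm_sq_reim, Complex.sub_re, Complex.mul_re, Complex.I_re,
      Complex.I_im, Complex.ofReal_re, Complex.ofReal_im, Complex.sub_im,
      Complex.mul_im]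
    nlinarith [sq_nonneg (d1.im - α * w.re + d2.re), sq_nonneg (d1.re + α * w.im - d2.im)]
  have i1 : Integrable fun x => h * ‖v x‖ ^ 2 :=
    ((contDiff_normsq hv).continuous.integrable_of_hasCompactSupport hns).const_mul h
  have i2 : Integrable fun x => fderiv ℝ V x (0, 1) :=
    ((hVC.continuous_fderiv (by norm_num)).clm_apply continuous_const).integrable_of_hasCompactSupport
      (hVc.fderiv_apply (𝕜 := ℝ) _)
  have i3 : Integrable fun x => 2 * (fderiv ℝ q x (1, 0) * fderiv ℝ p x (0, 1)) :=
    (((cdq _).mul (cdp _)).integrable_of_hasCompactSupport (sdp _).mul_left).const_mul 2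
  have i4 : Integrable fun x => 2 * (fderiv ℝ p x (1, 0) * fderiv ℝ q x (0, 1)) :=
    (((cdp _).mul (cdq _)).integrable_of_hasCompactSupport (sdq _).mul_left).const_mul 2
  have i5 : Integrable (magGradSq (Alin h) v) := by
    apply (continuous_magGradSq (continuous_Alin h) hv).integrable_of_hasCompactSupport
    apply HasCompactSupport.intro hvc
    intro x hx
    unfold magGradSq
    rw [fderiv_of_notMem_tsupport ℝ hx, image_eq_zero_of_notMem_tsupport hx]
    simp
  have i12 : Integrable fun x => h * ‖v x‖ ^ 2 + fderiv ℝ V x (0, 1) := i1.add i2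
  have i123 : Integrable fun x => h * ‖v x‖ ^ 2 + fderiv ℝ V x (0, 1) -
    2 * (fderiv ℝ q x (1, 0) * fderiv ℝ p x (0, 1)) := i12.sub i3
  have := integral_mono (i123.add i4) i5 hpt
  refine le_trans (le_of_eq ?_) this
  simp only [Pi.add_apply]
  rw [integral_add i123 i4, integral_sub i12 i3, integral_add i1 i2,
    integral_fderiv_zero hVC hVc, integral_const_mul, integral_const_mul, integral_const_mul,
    integral_jac hp hpc hq hqc]
  ring

lemma linearize {v : ℝ × ℝ → ℂ} {c l : ℝ} {x : ℝ × ℝ} {ε : ℝ}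
    (hε : 0 < ε) (hx : x.2 ∈ Ioo c (c + l)) (hl2 : l ≤ 2) :
    (1 - ε) * magGradSq (Alin (c + l)) v x - (4 / ε) * ‖v x‖ ^ 2 ≤ magGradSq Avan v x := by
  obtain ⟨h1, h2⟩ := hx
  set β : ℝ := (x.2 - (c + l)) ^ 2 / 2 with hβ
  have hβ0 : 0 ≤ β := by positivity
  have hβ2 : β ≤ 2 := by rw [hβ]; nlinarith
  have e1 : (Avan x).1 = (Alin (c + l) x).1 - β := by
    simp only [Avan, Alin, hβ]; ring
  have e2 : (Avan x).2 = (Alin (c + l) x).2 := rfl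
  unfold magGradSq
  rw [e2, e1]
  set z : ℂ := fderiv ℝ v x (1, 0) - Complex.I * ((Alin (c + l) x).1 : ℂ) * v x with hz
  have e3 : fderiv ℝ v x (1, 0) - Complex.I * (((Alin (c + l) x).1 - β : ℝ) : ℂ) * v x =
      z + Complex.I * (β : ℂ) * v x := by rw [hz]; push_cast; ring
  rw [e3]
  have n1 : ‖Complex.I * (β : ℂ) * v x‖ ≤ 2 * ‖v x‖ := by
    rw [norm_mul, norm_mul, Complex.norm_I, one_mul, Complex.norm_real, Real.norm_of_nonneg hβ0]
    gcongr
  have n2 : ‖z‖ - ‖Complex.I * (β : ℂ) * v x‖ ≤ ‖z + Complex.I * (β : ℂ) * v x‖ := by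
    have := norm_sub_norm_le z (-(Complex.I * (β : ℂ) * v x))
    rwa [norm_neg, sub_neg_eq_add] at this
  set w := Complex.I * (β : ℂ) * v x
  have n3 : (1 - ε) * ‖z‖ ^ 2 - (1 / ε) * ‖w‖ ^ 2 ≤ ‖z + w‖ ^ 2 := by
    have k1 : 2 * ‖z‖ * ‖w‖ ≤ ε * ‖z‖ ^ 2 + (1 / ε) * ‖w‖ ^ 2 := by
      have := sq_nonneg (ε * ‖z‖ - ‖w‖)
      have k2 : ε * ‖z‖ ^ 2 + (1 / ε) * ‖w‖ ^ 2 - 2 * ‖z‖ * ‖w‖ =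
        (ε * ‖z‖ - ‖w‖) ^ 2 / ε := by field_simp; ring
      have : 0 ≤ (ε * ‖z‖ - ‖w‖) ^ 2 / ε := by positivity
      linarith
    have k3 : (‖z‖ - ‖w‖) ^ 2 ≤ ‖z + w‖ ^ 2 := by
      rw [sq_le_sq, abs_of_nonneg (norm_nonneg (z + w))]
      have k4 := abs_norm_sub_norm_le z (-w)
      rwa [norm_neg, sub_neg_eq_add] at k4
    nlinarith [sq_nonneg ‖w‖]
  have n4 : (1 / ε) * ‖w‖ ^ 2 ≤ (4 / ε) * ‖v x‖ ^ 2 := by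
    have : ‖w‖ ^ 2 ≤ 4 * ‖v x‖ ^ 2 := by nlinarith [norm_nonneg w, norm_nonneg (v x)]
    calc (1 / ε) * ‖w‖ ^ 2 ≤ (1 / ε) * (4 * ‖v x‖ ^ 2) := by gcongr
      _ = _ := by ring
  have n5 : 0 ≤ ε * ‖fderiv ℝ v x (0, 1) - Complex.I * ((Alin (c + l) x).2 : ℂ) * v x‖ ^ 2 := by
    positivity
  linarith

lemma linearize_energy {v : ℝ × ℝ → ℂ} (hv : ContDiff ℝ 1 v) (hv1 : ∀ x, ‖v x‖ ≤ 1)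
    {a c l lam : ℝ} (hlam : 4 ≤ lam) (hl1 : 1 ≤ l) (hl2 : l ≤ 2) :
    (1 - 1 / √lam) * (∫ x in cell a c l, gdens (Alin (c + l)) lam v x) - 20 * √lam ≤
      ∫ x in cell a c l, gdens Avan lam v x := by
  have hs2 : 2 ≤ √lam := by
    rw [show (2:ℝ) = √4 by rw [show (4:ℝ) = 2 ^ 2 by norm_num, Real.sqrt_sq (by norm_num)]]
    exact Real.sqrt_le_sqrt hlam
  have hsq := Real.mul_self_sqrt (show 0 ≤ lam by linarith)
  set S := √lam
  have hS : 0 < S := by linarith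
  have i1 : IntegrableOn (gdens (Alin (c + l)) lam v) (cell a c l) :=
    integrableOn_cell (continuous_gdens (continuous_Alin _) lam hv) _ _ _
  have i2 : IntegrableOn (gdens Avan lam v) (cell a c l) :=
    integrableOn_cell (continuous_gdens continuous_Avan lam hv) _ _ _
  have i3 : IntegrableOn (fun _ : ℝ × ℝ => 5 * S) (cell a c l) :=
    integrableOn_const (volume_cell_ne_top a c l)
  have hpt : ∀ x ∈ cell a c l, (1 - 1 / S) * gdens (Alin (c + l)) lam v x - 5 * S ≤
      gdens Avan lam v x := by
    intro x hx
    have h1 := linearize (v := v) (ε := 1 / S) (by positivity) hx.2 hl2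
    rw [show 4 / (1 / S) = 4 * S by field_simp] at h1
    have h2 : ‖v x‖ ^ 2 ≤ 1 := by nlinarith [hv1 x, norm_nonneg (v x)]
    have h3 : 0 ≤ ‖v x‖ ^ 4 := by positivity
    have h4 : 1 / S * lam = S := by rw [← hsq]; field_simp
    unfold gdens
    have h5 : (1 - 1 / S) * (magGradSq (Alin (c + l)) v x - lam * ‖v x‖ ^ 2 + lam / 2 * ‖v x‖ ^ 4)
      = (1 - 1 / S) * magGradSq (Alin (c + l)) v x - lam * ‖v x‖ ^ 2 + lam / 2 * ‖v x‖ ^ 4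
        + S * ‖v x‖ ^ 2 - S / 2 * ‖v x‖ ^ 4 := by
      linear_combination (‖v x‖ ^ 2 - ‖v x‖ ^ 4 / 2) * h4
    rw [h5]
    nlinarith
  have := setIntegral_mono_on ((i1.const_mul (1 - 1 / S)).sub i3) i2
    (isOpen_cell a c l).measurableSet hpt
  simp only [Pi.sub_apply] at this
  rw [integral_sub (i1.const_mul _) i3, integral_const_mul, setIntegral_const,
    volume_cell (by linarith), smul_eq_mul] at this
  have h6 : l ^ 2 * (5 * S) ≤ 20 * S := by
    have : l ^ 2 ≤ 4 := by nlinarith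
    nlinarith
  linarith

lemma Fdens_cont (b : ℝ) {u : ℝ × ℝ → ℂ} (hu : ContDiff ℝ 1 u) :
    Continuous fun x => b * magGradSq A₀ u x - ‖u x‖ ^ 2 + ‖u x‖ ^ 4 / 2 := by
  have h1 := continuous_magGradSq continuous_A₀ hu
  have h3 := hu.continuous
  fun_prop

lemma volume_Qsq {r : ℝ} (hr : 0 ≤ r) : volume.real (Qsq r) = r ^ 2 := by
  unfold Qsq
  rw [volume_rect (by linarith) (by linarith)]; ring

lemma volume_Qsq_ne_top (r : ℝ) : volume (Qsq r) ≠ ⊤ := by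
  unfold Qsq
  rw [Measure.volume_eq_prod, Measure.prod_prod]
  simp [ENNReal.mul_ne_top]

lemma measurableSet_Qsq (r : ℝ) : MeasurableSet (Qsq r) := measurableSet_Ioo.prod measurableSet_Ioo

lemma Fsq_lower {b r : ℝ} (hb : 0 ≤ b) (hr : 0 ≤ r) {u : ℝ × ℝ → ℂ} (hu : ContDiff ℝ 1 u) :
    -(r ^ 2 / 2) ≤ Fsq b r u := by
  unfold Fsq
  have h1 : ∫ x in Qsq r, (-(1/2) : ℝ) = -(r ^ 2 / 2) := by
    rw [setIntegral_const, volume_Qsq hr, smul_eq_mul]; ring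
  rw [← h1]
  apply setIntegral_mono_on (integrableOn_const (volume_Qsq_ne_top r))
    (integrableOn_rect (Fdens_cont b hu) _ _ _ _) (measurableSet_Qsq r)
  intro x _
  have := mul_nonneg hb (magGradSq_nonneg A₀ u x)
  nlinarith [sq_nonneg (‖u x‖ ^ 2 - 1)]

lemma eD_bdd {b r : ℝ} (hb : 0 ≤ b) (hr : 0 ≤ r) : BddBelow (Fsq b r '' {u | MemH10sq r u}) :=
  ⟨-(r ^ 2 / 2), by rintro _ ⟨u, hu, rfl⟩; exact Fsq_lower hb hr hu.1⟩

lemma eD_le {b r : ℝ} (hb : 0 ≤ b) (hr : 0 ≤ r) {u : ℝ × ℝ → ℂ} (hu : MemH10sq r u) :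
    eD b r ≤ Fsq b r u := csInf_le (eD_bdd hb hr) ⟨u, hu, rfl⟩

lemma zero_memH10 (r : ℝ) : MemH10sq r (fun _ => 0) := ⟨contDiff_const, fun _ _ => rfl⟩

lemma eD_nonpos {b r : ℝ} (hb : 0 ≤ b) (hr : 0 ≤ r) : eD b r ≤ 0 := by
  have := eD_le hb hr (zero_memH10 r)
  simpa [Fsq, magGradSq] using this

lemma eD_lower {b r : ℝ} (hb : 0 ≤ b) (hr : 0 ≤ r) : -(r ^ 2 / 2) ≤ eD b r := by
  refine le_csInf (Set.Nonempty.image _ ⟨fun _ => 0, show MemH10sq r _ from zero_memH10 r⟩) ?_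
  rintro _ ⟨u, hu, rfl⟩; exact Fsq_lower hb hr hu.1

lemma eD_mono {b b' r : ℝ} (hb : 0 ≤ b) (hbb : b ≤ b') (hr : 0 ≤ r) : eD b r ≤ eD b' r := by
  refine le_csInf (Set.Nonempty.image _ ⟨fun _ => 0, show MemH10sq r _ from zero_memH10 r⟩) ?_
  rintro _ ⟨u, hu, rfl⟩
  refine (eD_le hb hr hu).trans ?_
  unfold Fsq
  apply setIntegral_mono_on (integrableOn_rect (Fdens_cont b hu.1) _ _ _ _)
    (integrableOn_rect (Fdens_cont b' hu.1) _ _ _ _) (measurableSet_Qsq r)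
  intro x _
  have := mul_le_mul_of_nonneg_right hbb (magGradSq_nonneg A₀ u x)
  linarith

lemma g_nonpos {g : ℝ → ℝ} (hg : IsLimitG g) {b : ℝ} (hb : 0 < b) : g b ≤ 0 := by
  apply le_of_tendsto (hg b hb)
  filter_upwards [eventually_gt_atTop 0] with r hr
  exact div_nonpos_of_nonpos_of_nonneg (eD_nonpos hb.le hr.le) (by positivity)

lemma g_lower {g : ℝ → ℝ} (hg : IsLimitG g) {b : ℝ} (hb : 0 < b) : -(1/2) ≤ g b := by
  apply ge_of_tendsto (hg b hb)
  filter_upwards [eventually_gt_atTop 0] with r hr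
  rw [le_div_iff₀ (by positivity)]
  linarith [eD_lower hb.le hr.le]

lemma g_mono {g : ℝ → ℝ} (hg : IsLimitG g) {b b' : ℝ} (hb : 0 < b) (hbb : b ≤ b') :
    g b ≤ g b' := by
  apply le_of_tendsto_of_tendsto (hg b hb) (hg b' (hb.trans_le hbb))
  filter_upwards [eventually_gt_atTop 0] with r hr
  have := eD_mono hb.le hbb hr.le
  gcongr

/-- Rescaled and gauge transformed function. -/
def scl (S κ : ℝ) (p : ℝ × ℝ) (v : ℝ × ℝ → ℂ) (y : ℝ × ℝ) : ℂ :=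
  Complex.exp (((y.1 * y.2 / 2 + κ * y.1 : ℝ) : ℂ) * Complex.I) * v (p + S⁻¹ • y)

lemma scl_contDiff (S κ : ℝ) (p : ℝ × ℝ) {v : ℝ × ℝ → ℂ} (hv : ContDiff ℝ 1 v) :
    ContDiff ℝ 1 (scl S κ p v) := by
  unfold scl
  apply ContDiff.mul
  · apply ContDiff.cexp
    apply ContDiff.mul _ contDiff_const
    have hc : ContDiff ℝ 1 (fun y : ℝ × ℝ => y.1 * y.2 / 2 + κ * y.1) := by fun_prop
    exact Complex.ofRealCLM.contDiff.comp hc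
  · exact hv.comp (by fun_prop)

lemma scl_norm (S κ : ℝ) (p : ℝ × ℝ) (v : ℝ × ℝ → ℂ) (y : ℝ × ℝ) :
    ‖scl S κ p v y‖ = ‖v (p + S⁻¹ • y)‖ := by
  unfold scl
  rw [norm_mul, Complex.norm_exp_ofReal_mul_I, one_mul]

lemma scl_mag {S h : ℝ} (hS : 0 < S) (hSh : S ^ 2 = h) (p : ℝ × ℝ) {v : ℝ × ℝ → ℂ}
    (hv : ContDiff ℝ 1 v) (y : ℝ × ℝ) :
    magGradSq A₀ (scl S (S * p.2 - S⁻¹ * (h ^ 2 / 2)) p v) y =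
      h⁻¹ * magGradSq (Alin h) v (p + S⁻¹ • y) := by
  set κ := S * p.2 - S⁻¹ * (h ^ 2 / 2) with hκ
  have d1 : HasFDerivAt (fun y : ℝ × ℝ => y.1 * y.2 / 2 + κ * y.1)
      ((2:ℝ)⁻¹ • (y.1 • ContinuousLinearMap.snd ℝ ℝ ℝ + y.2 • ContinuousLinearMap.fst ℝ ℝ ℝ)
        + κ • ContinuousLinearMap.fst ℝ ℝ ℝ) y := by
    have k := (((hasFDerivAt_fst (𝕜 := ℝ) (p := y)).mul (hasFDerivAt_snd (𝕜 := ℝ) (p := y))).const_mul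
      (2:ℝ)⁻¹).add ((hasFDerivAt_fst (𝕜 := ℝ) (p := y)).const_mul κ)
    refine k.congr_of_eventuallyEq (Eventually.of_forall fun z => ?_)
    simp; ring
  have d2 := ((Complex.ofRealCLM.hasFDerivAt.comp y d1).mul_const Complex.I).cexp
  have d3 : HasFDerivAt (fun y : ℝ × ℝ => p + S⁻¹ • y)
      (S⁻¹ • ContinuousLinearMap.id ℝ (ℝ × ℝ)) y :=
    ((hasFDerivAt_id y).const_smul S⁻¹).const_add p
  have d4 := (hv.differentiable (by norm_num) (p + S⁻¹ • y)).hasFDerivAt.comp y d3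
  have d5 := (d2.mul d4).fderiv
  set E : ℂ := Complex.exp (((y.1 * y.2 / 2 + κ * y.1 : ℝ) : ℂ) * Complex.I) with hE
  have hEn : ‖E‖ = 1 := Complex.norm_exp_ofReal_mul_I _
  set X := p + S⁻¹ • y with hX
  have e1 : fderiv ℝ (scl S κ p v) y (1, 0) =
      E * (((S⁻¹ : ℝ) : ℂ) * fderiv ℝ v X (1, 0) + Complex.I * ((y.2 / 2 + κ : ℝ) : ℂ) * v X) := by
    refine (congrArg (fun T => T (1, 0)) d5).trans ?_
    simp
    simp only [hE, hX]
    push_cast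
    ring_nf
  have e2 : fderiv ℝ (scl S κ p v) y (0, 1) =
      E * (((S⁻¹ : ℝ) : ℂ) * fderiv ℝ v X (0, 1) + Complex.I * ((y.1 / 2 : ℝ) : ℂ) * v X) := by
    refine (congrArg (fun T => T (0, 1)) d5).trans ?_
    simp
    simp only [hE, hX]
    push_cast
    ring_nf
  have e0 : scl S κ p v y = E * v X := rfl
  have hh : h⁻¹ = S⁻¹ ^ 2 := by rw [← hSh, inv_pow]
  have f1 : fderiv ℝ (scl S κ p v) y (1, 0) - Complex.I * ((A₀ y).1 : ℂ) * scl S κ p v y =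
      E * (((S⁻¹ : ℝ) : ℂ) * (fderiv ℝ v X (1, 0) - Complex.I * ((Alin h X).1 : ℂ) * v X)) := by
    rw [e1, e0]
    have : (A₀ y).1 = y.2 / 2 + κ + S⁻¹ * (Alin h X).1 := by
      simp only [A₀, Alin, hX, hκ, Prod.snd_add, Prod.smul_snd, smul_eq_mul]
      rw [← hSh]; field_simp; ring
    rw [this]; push_cast; ring
  have f2 : fderiv ℝ (scl S κ p v) y (0, 1) - Complex.I * ((A₀ y).2 : ℂ) * scl S κ p v y =
      E * (((S⁻¹ : ℝ) : ℂ) * (fderiv ℝ v X (0, 1) - Complex.I * ((Alin h X).2 : ℂ) * v X)) := by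
    rw [e2, e0]
    simp only [A₀, Alin]
    push_cast; ring
  unfold magGradSq
  rw [f1, f2, norm_mul, norm_mul, norm_mul, norm_mul, hEn, Complex.norm_real,
    Real.norm_of_nonneg (by positivity), hh]
  ring

lemma Fdens_zero {b : ℝ} {w : ℝ × ℝ → ℂ} {y : ℝ × ℝ} (h : y ∉ tsupport w) :
    b * magGradSq A₀ w y - ‖w y‖ ^ 2 + ‖w y‖ ^ 4 / 2 = 0 := by
  have h1 := image_eq_zero_of_notMem_tsupport h
  have h2 : fderiv ℝ w y = 0 := fderiv_of_notMem_tsupport ℝ h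
  simp [magGradSq, h1, h2]

lemma Fdens_sum {ι : Type*} [Fintype ι] (b : ℝ) {w : ι → ℝ × ℝ → ℂ}
    (hw : ∀ k, ContDiff ℝ 1 (w k))
    (hd : ∀ k k' y, y ∈ tsupport (w k) → y ∈ tsupport (w k') → k = k') (y : ℝ × ℝ) :
    b * magGradSq A₀ (fun z => ∑ k, w k z) y - ‖∑ k, w k y‖ ^ 2 + ‖∑ k, w k y‖ ^ 4 / 2
      = ∑ k, (b * magGradSq A₀ (w k) y - ‖w k y‖ ^ 2 + ‖w k y‖ ^ 4 / 2) := by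
  classical
  have hf : fderiv ℝ (fun z => ∑ k, w k z) y = ∑ k, fderiv ℝ (w k) y :=
    fderiv_fun_sum fun k _ => (hw k).differentiable (by norm_num) y
  by_cases h : ∃ k0, y ∈ tsupport (w k0)
  · obtain ⟨k0, h0⟩ := h
    have hn : ∀ k, k ≠ k0 → y ∉ tsupport (w k) := fun k hk hy => hk (hd _ _ _ hy h0)
    have s1 : ∑ k, w k y = w k0 y := Finset.sum_eq_single k0
      (fun k _ hk => image_eq_zero_of_notMem_tsupport (hn k hk)) (by simp)
    have s2 : ∑ k, fderiv ℝ (w k) y = fderiv ℝ (w k0) y := Finset.sum_eq_single k0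
      (fun k _ hk => fderiv_of_notMem_tsupport ℝ (hn k hk)) (by simp)
    rw [Finset.sum_eq_single k0 (fun k _ hk => Fdens_zero (hn k hk)) (by simp)]
    simp only [magGradSq, hf, s1, s2]
  · push Not at h
    have s1 : ∑ k, w k y = 0 := Finset.sum_eq_zero
      (fun k _ => image_eq_zero_of_notMem_tsupport (h k))
    have s2 : ∑ k, fderiv ℝ (w k) y = 0 := Finset.sum_eq_zero
      (fun k _ => fderiv_of_notMem_tsupport ℝ (h k))
    rw [Finset.sum_eq_zero (fun k _ => Fdens_zero (h k))]
    simp [magGradSq, hf, s1, s2]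

lemma scl_tsupport (S κ : ℝ) (p : ℝ × ℝ) (v : ℝ × ℝ → ℂ) :
    tsupport (scl S κ p v) ⊆ (fun y => p + S⁻¹ • y) ⁻¹' tsupport v := by
  apply closure_minimal
  · intro y hy
    apply subset_tsupport
    intro h0
    apply hy
    simp [scl, h0]
  · exact (isClosed_tsupport v).preimage (by fun_prop)

lemma scl_integral {S : ℝ} (hS : 0 < S) (p : ℝ × ℝ) (f : ℝ × ℝ → ℝ) :
    ∫ y, f (p + S⁻¹ • y) = S ^ 2 * ∫ x, f x := by
  rw [Measure.integral_comp_inv_smul volume (fun z => f (p + z)) S,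
    integral_add_left_eq_self f p]
  simp [abs_of_pos hS]

lemma tile_N {a c l h lam : ℝ} (hl : 0 < l) (hh : 0 < h) (hlam : 0 < lam) {v : ℝ × ℝ → ℂ}
    (hv : ContDiff ℝ 1 v) (hs : tsupport v ⊆ cell a c l) (N : ℕ) :
    eD (h / lam) (N * (l * √h)) ≤ N ^ 2 * (h / lam * ∫ x, gdens (Alin h) lam v x) := by
  set S := √h with hSdef
  have hS : 0 < S := Real.sqrt_pos.mpr hh
  have hSh : S ^ 2 = h := Real.sq_sqrt hh.le
  set p : Fin N × Fin N → ℝ × ℝ := fun k =>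
    (a + N * l / 2 - (k.1 : ℕ) * l, c + N * l / 2 - (k.2 : ℕ) * l) with hp
  set w : Fin N × Fin N → ℝ × ℝ → ℂ := fun k =>
    scl S (S * (p k).2 - S⁻¹ * (h ^ 2 / 2)) (p k) v with hw
  have hwc : ∀ k, ContDiff ℝ 1 (w k) := fun k => scl_contDiff _ _ _ hv
  have hsup : ∀ k y, y ∈ tsupport (w k) →
      ((k.1 : ℕ) * l < S⁻¹ * y.1 + N * l / 2 ∧ S⁻¹ * y.1 + N * l / 2 < ((k.1 : ℕ) + 1) * l) ∧
      ((k.2 : ℕ) * l < S⁻¹ * y.2 + N * l / 2 ∧ S⁻¹ * y.2 + N * l / 2 < ((k.2 : ℕ) + 1) * l) := by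
    intro k y hy
    have := hs (scl_tsupport _ _ _ _ hy)
    simp only [cell, hp, mem_prod, mem_Ioo, Prod.fst_add, Prod.snd_add, Prod.smul_fst,
      Prod.smul_snd, smul_eq_mul] at this
    obtain ⟨⟨h1, h2⟩, h3, h4⟩ := this
    refine ⟨⟨?_, ?_⟩, ?_, ?_⟩ <;> linarith
  have hnat : ∀ i j : ℕ, ∀ z : ℝ, i * l < z → z < (i + 1) * l → j * l < z → z < (j + 1) * l →
      i = j := by
    intro i j z h1 h2 h3 h4
    have k1 : (i : ℝ) < j + 1 := lt_of_mul_lt_mul_right (h1.trans h4) hl.le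
    have k2 : (j : ℝ) < i + 1 := lt_of_mul_lt_mul_right (h3.trans h2) hl.le
    have k1' : i < j + 1 := by exact_mod_cast k1
    have k2' : j < i + 1 := by exact_mod_cast k2
    omega
  have hd : ∀ k k' y, y ∈ tsupport (w k) → y ∈ tsupport (w k') → k = k' := by
    intro k k' y h1 h2
    obtain ⟨⟨a1, a2⟩, a3, a4⟩ := hsup k y h1
    obtain ⟨⟨b1, b2⟩, b3, b4⟩ := hsup k' y h2
    exact Prod.ext (Fin.ext (hnat _ _ _ a1 a2 b1 b2)) (Fin.ext (hnat _ _ _ a3 a4 b3 b4))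
  have hin1 : ∀ i : Fin N, ∀ t : ℝ, (i : ℕ) * l < S⁻¹ * t + N * l / 2 →
      S⁻¹ * t + N * l / 2 < ((i : ℕ) + 1) * l →
      t ∈ Ioo (-(N * (l * S)) / 2) (N * (l * S) / 2) := by
    intro i t h1 h2
    have e : t = S * (S⁻¹ * t) := by field_simp
    have i1 : ((i : ℕ) : ℝ) + 1 ≤ N := by exact_mod_cast i.2
    have i2 := mul_le_mul_of_nonneg_right i1 hl.le
    have i3 : 0 ≤ ((i : ℕ) : ℝ) * l := by positivity
    have j1 : S⁻¹ * t < N * l / 2 := by linarith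
    have j2 : -(N * l / 2) < S⁻¹ * t := by linarith
    have j3 := mul_lt_mul_of_pos_left j1 hS
    have j4 := mul_lt_mul_of_pos_left j2 hS
    rw [← e] at j3 j4
    constructor <;> linarith
  have hin : ∀ k y, y ∈ tsupport (w k) → y ∈ Qsq (N * (l * S)) := by
    intro k y hy
    obtain ⟨⟨a1, a2⟩, a3, a4⟩ := hsup k y hy
    exact ⟨hin1 _ _ a1 a2, hin1 _ _ a3 a4⟩
  have hmem : MemH10sq (N * (l * S)) (fun z => ∑ k, w k z) := by
    refine ⟨ContDiff.sum fun k _ => hwc k, fun y hy => ?_⟩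
    have hy' : y ∉ Qsq (N * (l * S)) := by
      have : IsOpen (Qsq (N * (l * S))) := isOpen_Ioo.prod isOpen_Ioo
      rw [this.frontier_eq] at hy
      exact hy.2
    exact Finset.sum_eq_zero fun k _ => image_eq_zero_of_notMem_tsupport fun hk => hy' (hin k y hk)
  have hr : 0 ≤ N * (l * S) := by positivity
  refine (eD_le (by positivity) hr hmem).trans (le_of_eq ?_)
  unfold Fsq
  simp_rw [Fdens_sum (h / lam) hwc hd]
  have hInt : ∀ k ∈ (Finset.univ : Finset (Fin N × Fin N)), Integrable (fun y => h / lam * magGradSq A₀ (w k) y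
      - ‖w k y‖ ^ 2 + ‖w k y‖ ^ 4 / 2) (volume.restrict (Qsq (N * (l * S)))) :=
    fun k _ => integrableOn_rect (Fdens_cont _ (hwc k)) _ _ _ _
  rw [integral_finsetSum _ hInt]
  have hk : ∀ k, ∫ y in Qsq (N * (l * S)),
      (h / lam * magGradSq A₀ (w k) y - ‖w k y‖ ^ 2 + ‖w k y‖ ^ 4 / 2)
      = h / lam * ∫ x, gdens (Alin h) lam v x := by
    intro k
    rw [setIntegral_eq_integral_of_forall_compl_eq_zero
      fun y hy => Fdens_zero fun h => hy (hin k y h)]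
    have : ∀ y, (h / lam * magGradSq A₀ (w k) y - ‖w k y‖ ^ 2 + ‖w k y‖ ^ 4 / 2)
        = lam⁻¹ * gdens (Alin h) lam v (p k + S⁻¹ • y) := by
      intro y
      simp only [hw]
      rw [scl_mag hS hSh (p k) hv y, scl_norm]
      unfold gdens
      field_simp
    simp_rw [this]
    rw [integral_const_mul, scl_integral hS (p k) (gdens (Alin h) lam v), hSh]
    field_simp
  rw [Finset.sum_congr rfl fun k _ => hk k, Finset.sum_const, Finset.card_univ,
    Fintype.card_prod, Fintype.card_fin, nsmul_eq_mul]
  push_cast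
  ring

lemma tile {g : ℝ → ℝ} (hg : IsLimitG g) {a c l h lam : ℝ} (hl : 0 < l) (hh : 0 < h)
    (hlam : 0 < lam) {v : ℝ × ℝ → ℂ}
    (hv : ContDiff ℝ 1 v) (hs : tsupport v ⊆ cell a c l) :
    lam * l ^ 2 * g (h / lam) ≤ ∫ x in cell a c l, gdens (Alin h) lam v x := by
  have e : ∫ x in cell a c l, gdens (Alin h) lam v x = ∫ x, gdens (Alin h) lam v x := by
    apply setIntegral_eq_integral_of_forall_compl_eq_zero
    intro x hx
    have hx' : x ∉ tsupport v := fun h => hx (hs h)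
    have h1 := image_eq_zero_of_notMem_tsupport hx'
    have h2 : fderiv ℝ v x = 0 := fderiv_of_notMem_tsupport ℝ hx'
    simp [gdens, magGradSq, h1, h2]
  rw [e]
  set I := ∫ x, gdens (Alin h) lam v x
  have hS : 0 < √h := Real.sqrt_pos.mpr hh
  have ht : Tendsto (fun N : ℕ => (N : ℝ) * (l * √h)) atTop atTop :=
    tendsto_natCast_atTop_atTop.atTop_mul_const (by positivity)
  have hlim := (hg (h / lam) (by positivity)).comp ht
  have : g (h / lam) ≤ I / (lam * l ^ 2) := by
    apply le_of_tendsto hlim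
    filter_upwards [eventually_gt_atTop 0] with N hN
    have hN' : (0:ℝ) < N := by exact_mod_cast hN
    simp only [Function.comp]
    rw [div_le_iff₀ (by positivity)]
    refine (tile_N hl hh hlam hv hs N).trans (le_of_eq ?_)
    have hS2 := Real.sq_sqrt hh.le
    rw [mul_pow, mul_pow, hS2]
    field_simp
    rfl
  rw [le_div_iff₀ (by positivity)] at this
  linarith

/-- Extension of `g` used in the Riemann sum. -/
def G2 (g : ℝ → ℝ) (b : ℝ) : ℝ := if b ≤ 0 then -(1/2) else if b < 1 then g b else 0

lemma G2_nonpos {g : ℝ → ℝ} (hg : IsLimitG g) (b : ℝ) : G2 g b ≤ 0 := by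
  unfold G2
  split_ifs with h1 h2
  · norm_num
  · exact g_nonpos hg (not_le.mp h1)
  · exact le_rfl

lemma G2_lower {g : ℝ → ℝ} (hg : IsLimitG g) (b : ℝ) : -(1/2) ≤ G2 g b := by
  unfold G2
  split_ifs with h1 h2
  · norm_num
  · exact g_lower hg (not_le.mp h1)
  · norm_num

lemma G2_mono {g : ℝ → ℝ} (hg : IsLimitG g) : Monotone (G2 g) := by
  intro b b' hb
  by_cases h1 : b ≤ 0
  · have : G2 g b = -(1/2) := by simp [G2, h1]
    rw [this]; exact G2_lower hg _
  · by_cases h2 : b' < 1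
    · have h3 : ¬ b' ≤ 0 := by linarith
      have h4 : b < 1 := by linarith
      simp only [G2, h1, h2, h3, h4, if_true, if_false]
      exact g_mono hg (not_le.mp h1) hb
    · have h3 : ¬ b' ≤ 0 := by linarith
      have : G2 g b' = 0 := by simp [G2, h2, h3]
      rw [this]; exact G2_nonpos hg _

lemma lin_nonneg {a c l h lam : ℝ} (hh : lam ≤ h) (hlam : 0 ≤ lam)
    {v : ℝ × ℝ → ℂ} (hv : ContDiff ℝ 1 v) (hvc : HasCompactSupport v)
    (hs : tsupport v ⊆ cell a c l) :
    0 ≤ ∫ x in cell a c l, gdens (Alin h) lam v x := by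
  have e : ∫ x in cell a c l, gdens (Alin h) lam v x = ∫ x, gdens (Alin h) lam v x := by
    apply setIntegral_eq_integral_of_forall_compl_eq_zero
    intro x hx
    have hx' : x ∉ tsupport v := fun h => hx (hs h)
    have h1 := image_eq_zero_of_notMem_tsupport hx'
    have h2 : fderiv ℝ v x = 0 := fderiv_of_notMem_tsupport ℝ hx'
    simp [gdens, magGradSq, h1, h2]
  rw [e]
  have supp : ∀ f : ℝ × ℝ → ℝ, Continuous f → (∀ x, x ∉ tsupport v → f x = 0) → Integrable f :=
    fun f hf h0 => hf.integrable_of_hasCompactSupport (HasCompactSupport.intro hvc h0)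
  have hvcont := hv.continuous
  have i1 : Integrable fun x => ‖v x‖ ^ 2 := supp _ (by fun_prop) fun x hx => by
    simp [image_eq_zero_of_notMem_tsupport hx]
  have i2 : Integrable (magGradSq (Alin h) v) :=
    supp _ (continuous_magGradSq (continuous_Alin h) hv) fun x hx => by
      have h2 : fderiv ℝ v x = 0 := fderiv_of_notMem_tsupport ℝ hx
      simp [magGradSq, image_eq_zero_of_notMem_tsupport hx, h2]
  have i3 : Integrable (gdens (Alin h) lam v) :=
    supp _ (continuous_gdens (continuous_Alin h) lam hv) fun x hx => by
      have h2 : fderiv ℝ v x = 0 := fderiv_of_notMem_tsupport ℝ hx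
      simp [gdens, magGradSq, image_eq_zero_of_notMem_tsupport hx, h2]
  have h1 : ∫ x, (magGradSq (Alin h) v x - lam * ‖v x‖ ^ 2) ≤ ∫ x, gdens (Alin h) lam v x := by
    apply integral_mono (i2.sub (i1.const_mul lam)) i3
    intro x
    simp only [gdens, Pi.sub_apply]
    have : 0 ≤ lam / 2 * ‖v x‖ ^ 4 := by positivity
    linarith
  rw [integral_sub i2 (i1.const_mul lam), integral_const_mul] at h1
  have h2 := mag_lower hv hvc h
  have h3 : 0 ≤ ∫ x, ‖v x‖ ^ 2 := integral_nonneg fun x => by positivity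
  nlinarith

lemma low_cell : ∃ C > (0:ℝ), ∀ g : ℝ → ℝ, IsLimitG g → ∀ lam ≥ (4:ℝ), ∀ a c l : ℝ, 0 ≤ c →
    1 ≤ l → l ≤ 2 → ∀ u : ℝ × ℝ → ℂ, ContDiff ℝ 1 u → (∀ x, ‖u x‖ ≤ 1) →
    lam * l ^ 2 * G2 g ((c + l) / lam) - C * √lam ≤ ∫ x in cell a c l, gdens Avan lam u x := by
  obtain ⟨C, hC, hcut⟩ := cutoff_energy
  refine ⟨C + 20, by linarith, fun g hg lam hlam a c l hc hl1 hl2 u hu hu1 => ?_⟩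
  obtain ⟨v, hv, hvc, hs, hv1, hE⟩ := hcut lam hlam a c l hl1 hl2 u hu hu1 Avan continuous_Avan
  have h1 := linearize_energy (a := a) (c := c) hv hv1 hlam hl1 hl2
  have hX : lam * l ^ 2 * G2 g ((c + l) / lam) ≤ ∫ x in cell a c l, gdens (Alin (c + l)) lam v x := by
    by_cases hb : (c + l) / lam < 1
    · have hb0 : ¬ (c + l) / lam ≤ 0 := not_le.mpr (by positivity)
      have : G2 g ((c + l) / lam) = g ((c + l) / lam) := by simp only [G2, hb, hb0, if_true, if_false]
      rw [this]
      exact tile hg (by linarith) (by linarith) (by linarith) hv hs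
    · have hb0 : ¬ (c + l) / lam ≤ 0 := not_le.mpr (by positivity)
      have : G2 g ((c + l) / lam) = 0 := by simp only [G2, hb, hb0, if_false]
      rw [this, mul_zero]
      apply lin_nonneg _ (by linarith) hv hvc hs
      rw [not_lt, le_div_iff₀ (by linarith)] at hb
      linarith
  have hX0 : lam * l ^ 2 * G2 g ((c + l) / lam) ≤ 0 :=
    mul_nonpos_of_nonneg_of_nonpos (by positivity) (G2_nonpos hg _)
  set X := lam * l ^ 2 * G2 g ((c + l) / lam)
  have hs2 : 2 ≤ √lam := Real.le_sqrt_of_sq_le (by linarith)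
  have he : 1 / √lam ≤ 1 := by rw [div_le_one (by linarith)]; linarith
  have he0 : 0 ≤ 1 / √lam := by positivity
  have h2 : X ≤ (1 - 1 / √lam) * ∫ x in cell a c l, gdens (Alin (c + l)) lam v x := by
    have := mul_le_mul_of_nonneg_left hX (sub_nonneg.mpr he)
    nlinarith
  linarith

lemma cs_interval {φ : ℝ → ℝ} (hφ : Continuous φ) {s : ℝ} (hs : 0 < s) :
    (∫ t in (0:ℝ)..s, φ t) ^ 2 ≤ s * ∫ t in (0:ℝ)..s, φ t ^ 2 := by
  set I := ∫ t in (0:ℝ)..s, φ t with hI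
  have h0 : 0 ≤ ∫ t in (0:ℝ)..s, (φ t - I / s) ^ 2 :=
    intervalIntegral.integral_nonneg hs.le fun t _ => sq_nonneg _
  have e : ∫ t in (0:ℝ)..s, (φ t - I / s) ^ 2
      = (∫ t in (0:ℝ)..s, φ t ^ 2) - 2 * (I / s) * I + s * (I / s) ^ 2 := by
    have : ∀ t, (φ t - I / s) ^ 2 = φ t ^ 2 - 2 * (I / s) * φ t + (I / s) ^ 2 := fun t => by ring
    simp_rw [this]
    rw [intervalIntegral.integral_add (Continuous.intervalIntegrable (by fun_prop) _ _)
      (Continuous.intervalIntegrable (by fun_prop) _ _),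
      intervalIntegral.integral_sub (Continuous.intervalIntegrable (by fun_prop) _ _)
      (Continuous.intervalIntegrable (by fun_prop) _ _), intervalIntegral.integral_const_mul,
      intervalIntegral.integral_const, ← hI]
    simp
  rw [e] at h0
  have : s * (∫ t in (0:ℝ)..s, φ t ^ 2) - I ^ 2
      = s * ((∫ t in (0:ℝ)..s, φ t ^ 2) - 2 * (I / s) * I + s * (I / s) ^ 2) := by
    field_simp; ring
  nlinarith [mul_nonneg hs.le h0]

lemma diff_sq_le {w : ℝ × ℝ → ℂ} (hw : ContDiff ℝ 1 w) (p e : ℝ × ℝ) {s : ℝ} (hs : 0 < s) :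
    ‖w (p + s • e) - w p‖ ^ 2 ≤ s * ∫ t in (0:ℝ)..s, ‖fderiv ℝ w (p + t • e) e‖ ^ 2 := by
  have hc : Continuous fun t : ℝ => fderiv ℝ w (p + t • e) e :=
    (continuous_fderiv_apply' hw e).comp (by fun_prop)
  have hd : ∀ t ∈ uIcc 0 s, HasDerivAt (fun t : ℝ => w (p + t • e)) (fderiv ℝ w (p + t • e) e) t := by
    intro t _
    have h1 : HasDerivAt (fun t : ℝ => p + t • e) e t := by
      simpa using ((hasDerivAt_id t).smul_const e).const_add p
    exact (hw.differentiable (by norm_num) _).hasFDerivAt.comp_hasDerivAt t h1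
  have h2 := intervalIntegral.integral_eq_sub_of_hasDerivAt hd (hc.intervalIntegrable _ _)
  simp only [zero_smul, add_zero] at h2
  rw [← h2]
  refine le_trans ?_ (cs_interval hc.norm hs)
  have := intervalIntegral.norm_integral_le_integral_norm (μ := volume)
    (f := fun t : ℝ => fderiv ℝ w (p + t • e) e) hs.le
  gcongr

lemma shift_le {f : ℝ × ℝ → ℝ} (hf : Continuous f) (hf0 : ∀ x, 0 ≤ f x) {a c m l : ℝ}
    {q : ℝ × ℝ} {Q : Set (ℝ × ℝ)} (hQ : Q = cell a c l)
    (hq : ∀ p ∈ cell a c m, p + q ∈ Q) :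
    ∫ p in cell a c m, f (p + q) ≤ ∫ x in Q, f x := by
  have mp : MeasurePreserving (fun p : ℝ × ℝ => p + q) volume volume :=
    measurePreserving_add_right volume q
  have hemb : MeasurableEmbedding (fun p : ℝ × ℝ => p + q) := measurableEmbedding_addRight q
  rw [← mp.setIntegral_preimage_emb hemb f Q]
  apply setIntegral_mono_set
  · have : IntegrableOn f Q := by rw [hQ]; exact integrableOn_cell hf _ _ _
    exact (mp.integrableOn_comp_preimage hemb).mpr this
  · exact Eventually.of_forall fun x => hf0 _
  · exact Eventually.of_forall fun x hx => hq x hx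

lemma edge {w : ℝ × ℝ → ℂ} (hw : ContDiff ℝ 1 w) {a c m l s : ℝ} (hs : 0 < s) (q e : ℝ × ℝ)
    (hq : ∀ p ∈ cell a c m, ∀ t ∈ Icc 0 s, p + q + t • e ∈ cell a c l) :
    ∫ p in cell a c m, ‖w (p + q + s • e) - w (p + q)‖ ^ 2
      ≤ s ^ 2 * ∫ x in cell a c l, ‖fderiv ℝ w x e‖ ^ 2 := by
  set f : ℝ × ℝ → ℝ := fun x => ‖fderiv ℝ w x e‖ ^ 2 with hf
  have hfc : Continuous f := (continuous_fderiv_apply' hw e).norm.pow 2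
  have hwc := hw.continuous
  have hF : Continuous fun z : (ℝ × ℝ) × ℝ => f (z.1 + q + z.2 • e) := hfc.comp (by fun_prop)
  have hInt : Integrable (Function.uncurry fun (p : ℝ × ℝ) (t : ℝ) => f (p + q + t • e))
      ((volume.restrict (cell a c m)).prod (volume.restrict (Ioc 0 s))) := by
    rw [Measure.prod_restrict]
    have hK : IsCompact ((Icc a (a + m) ×ˢ Icc c (c + m)) ×ˢ Icc (0:ℝ) s) :=
      (isCompact_Icc.prod isCompact_Icc).prod isCompact_Icc
    have := hF.continuousOn.integrableOn_compact (μ := (volume : Measure (ℝ × ℝ)).prod volume) hK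
    exact this.mono_set (prod_mono (prod_mono Ioo_subset_Icc_self Ioo_subset_Icc_self)
      Ioc_subset_Icc_self)
  have h1 : ∫ p in cell a c m, ‖w (p + q + s • e) - w (p + q)‖ ^ 2
      ≤ ∫ p in cell a c m, s * ∫ t in Ioc 0 s, f (p + q + t • e) := by
    apply setIntegral_mono_on
    · exact integrableOn_cell (by fun_prop) _ _ _
    · exact (hInt.integral_prod_left).const_mul s
    · exact (isOpen_cell _ _ _).measurableSet
    · intro p _
      have := diff_sq_le hw (p + q) e hs
      rwa [intervalIntegral.integral_of_le hs.le] at this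
  refine h1.trans ?_
  rw [integral_const_mul, integral_integral_swap hInt, sq, mul_assoc]
  apply mul_le_mul_of_nonneg_left _ hs.le
  have h2 : ∫ t in Ioc 0 s, ∫ p in cell a c m, f (p + q + t • e)
      ≤ ∫ t in Ioc 0 s, ∫ x in cell a c l, f x := by
    apply setIntegral_mono_on
    · exact hInt.integral_prod_right
    · exact integrableOn_const (by simp)
    · exact measurableSet_Ioc
    · intro t ht
      simp_rw [add_assoc]
      exact shift_le hfc (fun x => by positivity) rfl
        (fun p hp => by rw [← add_assoc]; exact hq p hp t ⟨ht.1.le, ht.2⟩)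
  refine h2.trans (le_of_eq ?_)
  rw [setIntegral_const]
  simp [hs.le]

lemma union_le {f : ℝ × ℝ → ℝ} (hf0 : ∀ x, 0 ≤ f x) {A B : Set (ℝ × ℝ)}
    (hA : IntegrableOn f A) (hB : IntegrableOn f B) :
    ∫ x in A ∪ B, f x ≤ (∫ x in A, f x) + ∫ x in B, f x := by
  rw [← integral_add_measure hA hB]
  exact integral_mono_measure (Measure.restrict_union_le A B) (Eventually.of_forall hf0)
    (Integrable.add_measure hA hB)

lemma shift_cell {f : ℝ × ℝ → ℝ} (a c m q1 q2 : ℝ) :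
    ∫ x in cell (a + q1) (c + q2) m, f x = ∫ p in cell a c m, f (p + (q1, q2)) := by
  have mp : MeasurePreserving (fun p : ℝ × ℝ => p + (q1, q2)) volume volume :=
    measurePreserving_add_right volume _
  have hemb : MeasurableEmbedding (fun p : ℝ × ℝ => p + (q1, q2)) := measurableEmbedding_addRight _
  rw [← mp.setIntegral_preimage_emb hemb f]
  congr 2
  ext p
  simp only [cell, mem_preimage, mem_prod, mem_Ioo, Prod.fst_add, Prod.snd_add]
  constructor <;> rintro ⟨⟨h1, h2⟩, h3, h4⟩ <;> refine ⟨⟨?_, ?_⟩, ?_, ?_⟩ <;> linarith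

lemma cover {a c l s : ℝ} (hs : 0 < s) (hsl : 2 * s < l) :
    cell a c l ⊆ (cell (a + 0) (c + 0) (l - s) ∪ cell (a + s) (c + 0) (l - s)) ∪
      (cell (a + 0) (c + s) (l - s) ∪ cell (a + s) (c + s) (l - s)) := by
  rintro ⟨x, y⟩ ⟨⟨h1, h2⟩, h3, h4⟩
  simp only [cell, mem_union, mem_prod, mem_Ioo] at *
  by_cases hx : x < a + (l - s) <;> by_cases hy : y < c + (l - s)
  · left; left; refine ⟨⟨?_, ?_⟩, ?_, ?_⟩ <;> linarith
  · right; left; refine ⟨⟨?_, ?_⟩, ?_, ?_⟩ <;> linarith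
  · left; right; refine ⟨⟨?_, ?_⟩, ?_, ?_⟩ <;> linarith
  · right; right; refine ⟨⟨?_, ?_⟩, ?_, ?_⟩ <;> linarith

lemma loop_ineq (z00 z10 z01 z11 : ℂ) (α β : ℝ) (h : Real.cos (β - α) ≤ 5 / 9) :
    ‖z00‖ ^ 2 + ‖z10‖ ^ 2 + (‖z01‖ ^ 2 + ‖z11‖ ^ 2) ≤
      51 * (‖Complex.exp (α * Complex.I) * z10 - z00‖ ^ 2
        + ‖Complex.exp (β * Complex.I) * z11 - z01‖ ^ 2 + ‖z01 - z00‖ ^ 2 + ‖z11 - z10‖ ^ 2) := by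
  set d1 := ‖Complex.exp (α * Complex.I) * z10 - z00‖
  set d2 := ‖Complex.exp (β * Complex.I) * z11 - z01‖
  set d3 := ‖z01 - z00‖
  set d4 := ‖z11 - z10‖
  have n1 : ‖Complex.exp (α * Complex.I)‖ = 1 := Complex.norm_exp_ofReal_mul_I α
  have n2 : ‖Complex.exp (β * Complex.I)‖ = 1 := Complex.norm_exp_ofReal_mul_I β
  have p1 : 8 / 9 ≤ ‖Complex.exp (β * Complex.I) - Complex.exp (α * Complex.I)‖ ^ 2 := by
    rw [norm_sq_reim]
    simp only [Complex.sub_re, Complex.sub_im, Complex.exp_ofReal_mul_I_re,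
      Complex.exp_ofReal_mul_I_im]
    rw [Real.cos_sub] at h
    nlinarith [Real.sin_sq_add_cos_sq α, Real.sin_sq_add_cos_sq β]
  have p2 : ‖Complex.exp (β * Complex.I) - Complex.exp (α * Complex.I)‖ * ‖z11‖
      ≤ d1 + d2 + d3 + d4 := by
    rw [← norm_mul]
    have e : (Complex.exp (β * Complex.I) - Complex.exp (α * Complex.I)) * z11
        = (Complex.exp (β * Complex.I) * z11 - z01) + (z01 - z00)
          - (Complex.exp (α * Complex.I) * z10 - z00)
          - Complex.exp (α * Complex.I) * (z11 - z10) := by ring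
    rw [e]
    have a1 := norm_sub_le ((Complex.exp (β * Complex.I) * z11 - z01) + (z01 - z00)
          - (Complex.exp (α * Complex.I) * z10 - z00)) (Complex.exp (α * Complex.I) * (z11 - z10))
    have a2 := norm_sub_le ((Complex.exp (β * Complex.I) * z11 - z01) + (z01 - z00))
          (Complex.exp (α * Complex.I) * z10 - z00)
    have a3 := norm_add_le (Complex.exp (β * Complex.I) * z11 - z01) (z01 - z00)
    rw [norm_mul (Complex.exp (α * Complex.I)), n1, one_mul] at a1
    linarith
  have p3 : 8 / 9 * ‖z11‖ ^ 2 ≤ 4 * (d1 ^ 2 + d2 ^ 2 + d3 ^ 2 + d4 ^ 2) := by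
    have b1 : 8 / 9 * ‖z11‖ ^ 2 ≤ (d1 + d2 + d3 + d4) ^ 2 := by
      calc 8 / 9 * ‖z11‖ ^ 2 ≤ ‖Complex.exp (β * Complex.I) - Complex.exp (α * Complex.I)‖ ^ 2 * ‖z11‖ ^ 2 := by
            gcongr
        _ = (‖Complex.exp (β * Complex.I) - Complex.exp (α * Complex.I)‖ * ‖z11‖) ^ 2 := by ring
        _ ≤ _ := by gcongr
    nlinarith [sq_nonneg (d1 - d2), sq_nonneg (d1 - d3), sq_nonneg (d1 - d4), sq_nonneg (d2 - d3),
      sq_nonneg (d2 - d4), sq_nonneg (d3 - d4)]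
  have two : ∀ x y d : ℝ, 0 ≤ x → x ≤ y + d → x ^ 2 ≤ 2 * y ^ 2 + 2 * d ^ 2 := by
    intro x y d hx h
    nlinarith [sq_nonneg (y - d), pow_le_pow_left₀ hx h 2]
  have q1 : ‖z10‖ ^ 2 ≤ 2 * ‖z11‖ ^ 2 + 2 * d4 ^ 2 := by
    apply two _ _ _ (norm_nonneg _)
    have := norm_sub_le z11 (z11 - z10)
    simpa using this
  have q2 : ‖z01‖ ^ 2 ≤ 2 * ‖z11‖ ^ 2 + 2 * d2 ^ 2 := by
    apply two _ _ _ (norm_nonneg _)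
    have := norm_sub_le (Complex.exp (β * Complex.I) * z11) (Complex.exp (β * Complex.I) * z11 - z01)
    rw [norm_mul, n2, one_mul] at this
    simpa using this
  have q3 : ‖z00‖ ^ 2 ≤ 2 * ‖z01‖ ^ 2 + 2 * d3 ^ 2 := by
    apply two _ _ _ (norm_nonneg _)
    have := norm_sub_le z01 (z01 - z00)
    simpa using this
  nlinarith [sq_nonneg d1, sq_nonneg d2, sq_nonneg d3, sq_nonneg d4]

/-- Gauge transformed function for the first direction. -/
def gau (u : ℝ × ℝ → ℂ) (x : ℝ × ℝ) : ℂ :=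
  Complex.exp (((x.1 * x.2 ^ 2 / 2 : ℝ) : ℂ) * Complex.I) * u x

lemma gau_contDiff {u : ℝ × ℝ → ℂ} (hu : ContDiff ℝ 1 u) : ContDiff ℝ 1 (gau u) := by
  unfold gau
  apply ContDiff.mul
  · apply ContDiff.cexp
    apply ContDiff.mul _ contDiff_const
    have hc : ContDiff ℝ 1 (fun x : ℝ × ℝ => x.1 * x.2 ^ 2 / 2) := by fun_prop
    exact Complex.ofRealCLM.contDiff.comp hc
  · exact hu

lemma gau_fderiv {u : ℝ × ℝ → ℂ} (hu : ContDiff ℝ 1 u) (x : ℝ × ℝ) :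
    ‖fderiv ℝ (gau u) x (1, 0)‖ = ‖fderiv ℝ u x (1, 0) - Complex.I * ((Avan x).1 : ℂ) * u x‖ := by
  have hd : HasDerivAt (fun t : ℝ => gau u (x + t • (1, 0))) (fderiv ℝ (gau u) x (1, 0)) 0 := by
    have h1 : HasDerivAt (fun t : ℝ => x + t • ((1:ℝ), (0:ℝ))) (1, 0) 0 := by
      simpa using ((hasDerivAt_id (0:ℝ)).smul_const ((1:ℝ), (0:ℝ))).const_add x
    have h2 : HasFDerivAt (gau u) (fderiv ℝ (gau u) x) (x + (0:ℝ) • ((1:ℝ), (0:ℝ))) := by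
      simpa using ((gau_contDiff hu).differentiable (by norm_num) x).hasFDerivAt
    exact h2.comp_hasDerivAt (0:ℝ) h1
  have hd' : HasDerivAt (fun t : ℝ => u (x + t • (1, 0))) (fderiv ℝ u x (1, 0)) 0 := by
    have h1 : HasDerivAt (fun t : ℝ => x + t • ((1:ℝ), (0:ℝ))) (1, 0) 0 := by
      simpa using ((hasDerivAt_id (0:ℝ)).smul_const ((1:ℝ), (0:ℝ))).const_add x
    have h2 : HasFDerivAt u (fderiv ℝ u x) (x + (0:ℝ) • ((1:ℝ), (0:ℝ))) := by
      simpa using (hu.differentiable (by norm_num) x).hasFDerivAt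
    exact h2.comp_hasDerivAt (0:ℝ) h1
  have he : HasDerivAt (fun t : ℝ => (x.1 + t) * x.2 ^ 2 / 2) (x.2 ^ 2 / 2) 0 := by
    have := (((hasDerivAt_id (0:ℝ)).const_add x.1).mul_const (x.2 ^ 2 / 2))
    simp only [one_mul] at this
    refine this.congr_of_eventuallyEq (Eventually.of_forall fun t => ?_)
    simp; ring
  have he2 := ((he.ofReal_comp).mul_const Complex.I).cexp.mul hd'
  have hu2 := hd.unique (he2.congr_of_eventuallyEq (Eventually.of_forall fun t => by
    simp [gau]))
  rw [hu2]
  simp only [add_zero, zero_smul]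
  set E := Complex.exp (((x.1 * x.2 ^ 2 / 2 : ℝ) : ℂ) * Complex.I)
  have hE : ‖E‖ = 1 := Complex.norm_exp_ofReal_mul_I _
  have : E * (((x.2 ^ 2 / 2 : ℝ) : ℂ) * Complex.I) * u x + E * fderiv ℝ u x (1, 0)
      = E * (fderiv ℝ u x (1, 0) - Complex.I * ((Avan x).1 : ℂ) * u x) := by
    simp only [Avan]; push_cast; ring
  rw [this, norm_mul, hE, one_mul]

lemma gau_diff (u : ℝ × ℝ → ℂ) (p : ℝ × ℝ) (s : ℝ) :
    ‖gau u (p + s • (1, 0)) - gau u p‖ =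
      ‖Complex.exp (((s * p.2 ^ 2 / 2 : ℝ) : ℂ) * Complex.I) * u (p + s • (1, 0)) - u p‖ := by
  unfold gau
  have e : (((p + s • ((1:ℝ), (0:ℝ))).1 * (p + s • ((1:ℝ), (0:ℝ))).2 ^ 2 / 2 : ℝ) : ℂ) * Complex.I
      = ((p.1 * p.2 ^ 2 / 2 : ℝ) : ℂ) * Complex.I + ((s * p.2 ^ 2 / 2 : ℝ) : ℂ) * Complex.I := by
    simp; ring
  rw [e, Complex.exp_add, mul_assoc, ← mul_sub, norm_mul, Complex.norm_exp_ofReal_mul_I, one_mul]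

lemma neumann {a c l : ℝ} (hc : 400 ≤ c) (hl1 : 1 ≤ l) (hl2 : l ≤ 2) {u : ℝ × ℝ → ℂ}
    (hu : ContDiff ℝ 1 u) :
    ∫ x in cell a c l, ‖u x‖ ^ 2 ≤ 102 / c * ∫ x in cell a c l, magGradSq Avan u x := by
  set s := √(1 / c) with hsdef
  have hs : 0 < s := Real.sqrt_pos.mpr (by positivity)
  have hs2 : s ^ 2 = 1 / c := Real.sq_sqrt (by positivity)
  have hs20 : s ≤ 1 / 20 := by
    rw [hsdef]; apply Real.sqrt_le_iff.mpr ⟨by norm_num, ?_⟩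
    rw [div_le_iff₀ (by linarith)]; linarith
  have huc := hu.continuous
  have hgu := gau_contDiff hu
  have hgc := hgu.continuous
  have hf : Continuous fun x => ‖u x‖ ^ 2 := by fun_prop
  have hf0 : ∀ x, 0 ≤ ‖u x‖ ^ 2 := fun x => by positivity
  set m := l - s with hm
  -- covering
  have h1 : ∫ x in cell a c l, ‖u x‖ ^ 2 ≤
      ((∫ x in cell (a + 0) (c + 0) m, ‖u x‖ ^ 2) + ∫ x in cell (a + s) (c + 0) m, ‖u x‖ ^ 2) +
      ((∫ x in cell (a + 0) (c + s) m, ‖u x‖ ^ 2) + ∫ x in cell (a + s) (c + s) m, ‖u x‖ ^ 2) := by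
    have I := fun a' c' => integrableOn_cell hf a' c' m
    refine (setIntegral_mono_set (((I _ _).union (I _ _)).union ((I _ _).union (I _ _)))
      (Eventually.of_forall hf0) (Eventually.of_forall (cover hs (by linarith)))).trans ?_
    refine (union_le hf0 ((I _ _).union (I _ _)) ((I _ _).union (I _ _))).trans ?_
    exact add_le_add (union_le hf0 (I _ _) (I _ _)) (union_le hf0 (I _ _) (I _ _))
  rw [shift_cell, shift_cell, shift_cell, shift_cell] at h1
  have J : ∀ {f : ℝ × ℝ → ℝ}, Continuous f → Integrable f (volume.restrict (cell a c m)) :=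
    fun hf => integrableOn_cell hf a c m
  have h2 : ((∫ p in cell a c m, ‖u (p + (0, 0))‖ ^ 2) + ∫ p in cell a c m, ‖u (p + (s, 0))‖ ^ 2) +
      ((∫ p in cell a c m, ‖u (p + (0, s))‖ ^ 2) + ∫ p in cell a c m, ‖u (p + (s, s))‖ ^ 2)
      = ∫ p in cell a c m, ((‖u (p + (0, 0))‖ ^ 2 + ‖u (p + (s, 0))‖ ^ 2) +
        (‖u (p + (0, s))‖ ^ 2 + ‖u (p + (s, s))‖ ^ 2)) := by
    rw [integral_add (J (by fun_prop)) (J (by fun_prop)), integral_add (J (by fun_prop)) (J (by fun_prop)),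
      integral_add (J (by fun_prop)) (J (by fun_prop))]
  have h3 : ∫ p in cell a c m, ((‖u (p + (0, 0))‖ ^ 2 + ‖u (p + (s, 0))‖ ^ 2) +
        (‖u (p + (0, s))‖ ^ 2 + ‖u (p + (s, s))‖ ^ 2)) ≤
      ∫ p in cell a c m, 51 * (‖gau u (p + (0, 0) + s • (1, 0)) - gau u (p + (0, 0))‖ ^ 2
        + ‖gau u (p + (0, s) + s • (1, 0)) - gau u (p + (0, s))‖ ^ 2
        + ‖u (p + (0, 0) + s • (0, 1)) - u (p + (0, 0))‖ ^ 2
        + ‖u (p + (s, 0) + s • (0, 1)) - u (p + (s, 0))‖ ^ 2) := by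
    apply setIntegral_mono_on (J (by fun_prop)) (J (by fun_prop)) (isOpen_cell _ _ _).measurableSet
    rintro ⟨x, y⟩ ⟨_, hy1, hy2⟩
    simp only at hy1 hy2
    rw [gau_diff, gau_diff]
    have hcos : Real.cos (s * (y + s) ^ 2 / 2 - s * y ^ 2 / 2) ≤ 5 / 9 := by
      have e : s * (y + s) ^ 2 / 2 - s * y ^ 2 / 2 = s ^ 2 * (y + s / 2) := by ring
      rw [e, hs2]
      refine le_trans (Real.cos_le_cos_of_nonneg_of_le_pi (by norm_num) ?_ ?_) Real.cos_one_le
      · have : 1 / c * (y + s / 2) ≤ 2 := by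
          rw [div_mul_eq_mul_div, div_le_iff₀ (by linarith)]; linarith
        linarith [Real.two_le_pi]
      · rw [div_mul_eq_mul_div, le_div_iff₀ (by linarith)]; linarith
    have := loop_ineq (u (x, y)) (u (x + s, y)) (u (x, y + s)) (u (x + s, y + s)) _ _ hcos
    simpa using this
  have h4 : ∫ p in cell a c m, 51 * (‖gau u (p + (0, 0) + s • (1, 0)) - gau u (p + (0, 0))‖ ^ 2
        + ‖gau u (p + (0, s) + s • (1, 0)) - gau u (p + (0, s))‖ ^ 2
        + ‖u (p + (0, 0) + s • (0, 1)) - u (p + (0, 0))‖ ^ 2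
        + ‖u (p + (s, 0) + s • (0, 1)) - u (p + (s, 0))‖ ^ 2)
      = 51 * ((∫ p in cell a c m, ‖gau u (p + (0, 0) + s • (1, 0)) - gau u (p + (0, 0))‖ ^ 2)
        + (∫ p in cell a c m, ‖gau u (p + (0, s) + s • (1, 0)) - gau u (p + (0, s))‖ ^ 2)
        + (∫ p in cell a c m, ‖u (p + (0, 0) + s • (0, 1)) - u (p + (0, 0))‖ ^ 2)
        + (∫ p in cell a c m, ‖u (p + (s, 0) + s • (0, 1)) - u (p + (s, 0))‖ ^ 2)) := by
    rw [integral_const_mul, integral_add (J (by fun_prop)) (J (by fun_prop)),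
      integral_add (J (by fun_prop)) (J (by fun_prop)),
      integral_add (J (by fun_prop)) (J (by fun_prop))]
  have inc : ∀ q1 q2 e1 e2 : ℝ, (∀ t ∈ Icc 0 s, 0 ≤ q1 + t * e1 ∧ q1 + t * e1 ≤ s ∧
      0 ≤ q2 + t * e2 ∧ q2 + t * e2 ≤ s) →
      ∀ p ∈ cell a c m, ∀ t ∈ Icc 0 s, p + (q1, q2) + t • (e1, e2) ∈ cell a c l := by
    rintro q1 q2 e1 e2 h ⟨x, y⟩ ⟨⟨k1, k2⟩, k3, k4⟩ t ht
    obtain ⟨j1, j2, j3, j4⟩ := h t ht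
    simp only [cell, mem_prod, mem_Ioo, Prod.fst_add, Prod.snd_add, Prod.smul_mk, smul_eq_mul] at *
    refine ⟨⟨?_, ?_⟩, ?_, ?_⟩ <;> linarith
  have E1 := edge hgu (a := a) (c := c) (m := m) (l := l) hs (0, 0) (1, 0)
    (inc 0 0 1 0 fun t ht => by simp [ht.1, ht.2, hs.le])
  have E2 := edge hgu (a := a) (c := c) (m := m) (l := l) hs (0, s) (1, 0)
    (inc 0 s 1 0 fun t ht => by simp [ht.1, ht.2, hs.le])
  have E3 := edge hu (a := a) (c := c) (m := m) (l := l) hs (0, 0) (0, 1)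
    (inc 0 0 0 1 fun t ht => by simp [ht.1, ht.2, hs.le])
  have E4 := edge hu (a := a) (c := c) (m := m) (l := l) hs (s, 0) (0, 1)
    (inc s 0 0 1 fun t ht => by simp [ht.1, ht.2, hs.le])
  have hM : ∫ x in cell a c l, magGradSq Avan u x =
      (∫ x in cell a c l, ‖fderiv ℝ (gau u) x (1, 0)‖ ^ 2)
      + ∫ x in cell a c l, ‖fderiv ℝ u x (0, 1)‖ ^ 2 := by
    have c1 := continuous_fderiv_apply' hgu (1, 0)
    have c2 := continuous_fderiv_apply' hu (0, 1)
    rw [← integral_add (integrableOn_cell (by fun_prop) _ _ _) (integrableOn_cell (by fun_prop) _ _ _)]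
    congr 1
    ext x
    rw [gau_fderiv hu]
    simp [magGradSq, Avan]
  rw [h2] at h1
  refine h1.trans (h3.trans ?_)
  rw [h4, hM, div_eq_mul_one_div, ← hs2]
  linarith

lemma high_cell {a c l lam : ℝ} (hlam : 4 ≤ lam) (hc : 102 * lam ≤ c) (hl1 : 1 ≤ l) (hl2 : l ≤ 2)
    {u : ℝ × ℝ → ℂ} (hu : ContDiff ℝ 1 u) :
    0 ≤ ∫ x in cell a c l, gdens Avan lam u x := by
  have hN := neumann (a := a) (c := c) (by linarith) hl1 hl2 hu
  have huc := hu.continuous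
  have hm := continuous_magGradSq continuous_Avan hu
  have h1 : ∫ x in cell a c l, (magGradSq Avan u x - lam * ‖u x‖ ^ 2)
      ≤ ∫ x in cell a c l, gdens Avan lam u x := by
    apply setIntegral_mono_on (integrableOn_cell (by fun_prop) _ _ _)
      (integrableOn_cell (continuous_gdens continuous_Avan lam hu) _ _ _)
      (isOpen_cell _ _ _).measurableSet
    intro x _
    simp only [gdens]
    have : 0 ≤ lam / 2 * ‖u x‖ ^ 4 := by positivity
    linarith
  rw [integral_sub (integrableOn_cell hm _ _ _) (integrableOn_cell (by fun_prop) _ _ _),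
    integral_const_mul] at h1
  have h0 : 0 ≤ ∫ x in cell a c l, magGradSq Avan u x :=
    integral_nonneg fun x => magGradSq_nonneg _ _ _
  have h2 : lam * (102 / c) ≤ 1 := by
    rw [← mul_div_assoc, div_le_one (by linarith)]; linarith
  have h3 := mul_le_mul_of_nonneg_left hN (by linarith : 0 ≤ lam)
  have h4 := mul_le_mul_of_nonneg_right h2 h0
  nlinarith

lemma sum_cols {f : ℝ × ℝ → ℝ} (hf : Continuous f) (a l c d : ℝ) (hl : 0 ≤ l) (N : ℕ) :
    ∫ x in Ioc a (a + N * l) ×ˢ Ioc c d, f x =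
      ∑ i ∈ Finset.range N, ∫ x in Ioc (a + i * l) (a + i * l + l) ×ˢ Ioc c d, f x := by
  have I : ∀ p q, IntegrableOn f (Ioc p q ×ˢ Ioc c d) := fun p q =>
    (hf.continuousOn.integrableOn_compact (isCompact_Icc.prod isCompact_Icc)).mono_set
      (prod_mono Ioc_subset_Icc_self Ioc_subset_Icc_self)
  induction N with
  | zero => simp
  | succ n ih =>
    rw [Finset.sum_range_succ, ← ih, ← setIntegral_union _ _ (I _ _) (I _ _), ← union_prod,
      Ioc_union_Ioc_eq_Ioc]
    · congr 3; push_cast; ring_nf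
    · have : 0 ≤ (n:ℝ) * l := by positivity
      linarith
    · linarith
    · rw [Set.disjoint_prod]; left
      rw [Set.disjoint_left]; rintro x hx hx'; exact absurd hx.2 (not_le.mpr hx'.1)
    · exact measurableSet_Ioc.prod measurableSet_Ioc

lemma sum_rows {f : ℝ × ℝ → ℝ} (hf : Continuous f) (a b c l : ℝ) (hl : 0 ≤ l) (N : ℕ) :
    ∫ x in Ioc a b ×ˢ Ioc c (c + N * l), f x =
      ∑ j ∈ Finset.range N, ∫ x in Ioc a b ×ˢ Ioc (c + j * l) (c + j * l + l), f x := by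
  have I : ∀ p q, IntegrableOn f (Ioc a b ×ˢ Ioc p q) := fun p q =>
    (hf.continuousOn.integrableOn_compact (isCompact_Icc.prod isCompact_Icc)).mono_set
      (prod_mono Ioc_subset_Icc_self Ioc_subset_Icc_self)
  induction N with
  | zero => simp
  | succ n ih =>
    rw [Finset.sum_range_succ, ← ih, ← setIntegral_union _ _ (I _ _) (I _ _), ← prod_union,
      Ioc_union_Ioc_eq_Ioc]
    · congr 3; push_cast; ring_nf
    · have : 0 ≤ (n:ℝ) * l := by positivity
      linarith
    · linarith
    · rw [Set.disjoint_prod]; right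
      rw [Set.disjoint_left]; rintro x hx hx'; exact absurd hx.2 (not_le.mpr hx'.1)
    · exact measurableSet_Ioc.prod measurableSet_Ioc

lemma cell_Ioc (f : ℝ × ℝ → ℝ) (a c l : ℝ) :
    ∫ x in Ioc a (a + l) ×ˢ Ioc c (c + l), f x = ∫ x in cell a c l, f x := by
  apply setIntegral_congr_set
  unfold cell
  rw [Measure.volume_eq_prod]
  exact Measure.set_prod_ae_eq Ioo_ae_eq_Ioc.symm Ioo_ae_eq_Ioc.symm

lemma G2_int {g : ℝ → ℝ} : ∫ b in (0:ℝ)..1, G2 g b = ∫ b in (0:ℝ)..1, g b := by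
  rw [intervalIntegral.integral_of_le zero_le_one, intervalIntegral.integral_of_le zero_le_one,
    integral_Ioc_eq_integral_Ioo, integral_Ioc_eq_integral_Ioo]
  apply setIntegral_congr_fun measurableSet_Ioo
  intro b hb
  have h1 : ¬ b ≤ 0 := not_le.mpr hb.1
  simp only [G2, h1, hb.2, if_true, if_false]

lemma G2_II {g : ℝ → ℝ} (hg : IsLimitG g) (x y : ℝ) : IntervalIntegrable (G2 g) volume x y :=
  (G2_mono hg).intervalIntegrable

lemma G2_range {g : ℝ → ℝ} (hg : IsLimitG g) {x y : ℝ} (hx : 0 ≤ x) (hxy : x ≤ y) :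
    ∫ b in (0:ℝ)..1, g b ≤ ∫ b in x..y, G2 g b := by
  rw [← G2_int]
  have I := G2_II hg
  set Y := max y 1
  have e1 : ∫ b in (0:ℝ)..1, G2 g b = ∫ b in (0:ℝ)..Y, G2 g b := by
    rw [← intervalIntegral.integral_add_adjacent_intervals (I 0 1) (I 1 Y)]
    have : ∫ b in (1:ℝ)..Y, G2 g b = ∫ b in (1:ℝ)..Y, (0:ℝ) := by
      apply intervalIntegral.integral_congr
      intro b hb
      rw [uIcc_of_le (le_max_right _ _)] at hb
      have h1 : ¬ b ≤ 0 := by linarith [hb.1]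
      have h2 : ¬ b < 1 := by linarith [hb.1]
      simp [G2, h1, h2]
    rw [this]; simp
  have e2 : ∫ b in (0:ℝ)..Y, G2 g b = (∫ b in (0:ℝ)..x, G2 g b) + (∫ b in x..y, G2 g b)
      + ∫ b in y..Y, G2 g b := by
    rw [intervalIntegral.integral_add_adjacent_intervals (I 0 x) (I x y),
      intervalIntegral.integral_add_adjacent_intervals (I 0 y) (I y Y)]
  have n1 : ∀ p q : ℝ, p ≤ q → ∫ b in p..q, G2 g b ≤ 0 := by
    intro p q hpq
    have := intervalIntegral.integral_nonneg (μ := volume) (f := fun b => - G2 g b) hpq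
      (fun b _ => by linarith [G2_nonpos hg b])
    rw [intervalIntegral.integral_neg] at this
    linarith
  have := n1 0 x hx
  have := n1 y Y (le_max_left _ _)
  linarith

lemma riemann {g : ℝ → ℝ} (hg : IsLimitG g) {A l lam : ℝ} (hA : 0 ≤ A) (hl : 0 ≤ l)
    (hlam : 0 < lam) (n : ℕ) :
    lam * ∫ b in (0:ℝ)..1, g b ≤
      ∑ j ∈ Finset.range n, l * G2 g ((A + j * l + l) / lam) := by
  have mono : Monotone fun t : ℝ => G2 g (t / lam) := fun s t h => G2_mono hg (by gcongr)
  have h1 : ∑ j ∈ Finset.range n, ∫ t in (A + j * l)..(A + (j + 1 : ℕ) * l), G2 g (t / lam)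
      = ∫ t in (A + (0 : ℕ) * l)..(A + n * l), G2 g (t / lam) :=
    intervalIntegral.sum_integral_adjacent_intervals (a := fun j : ℕ => A + j * l)
      fun k _ => mono.intervalIntegrable
  have h2 : ∀ j ∈ Finset.range n, ∫ t in (A + j * l)..(A + (j + 1 : ℕ) * l), G2 g (t / lam)
      ≤ l * G2 g ((A + j * l + l) / lam) := by
    intro j _
    have e : A + (j + 1 : ℕ) * l = A + j * l + l := by push_cast; ring
    rw [e]
    have := intervalIntegral.integral_mono_on (a := A + j * l) (b := A + j * l + l) (μ := volume)
      (f := fun t => G2 g (t / lam)) (g := fun _ => G2 g ((A + j * l + l) / lam)) (by linarith)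
      mono.intervalIntegrable (by simp) (fun t ht => mono ht.2)
    simpa using this
  refine le_trans ?_ (Finset.sum_le_sum h2)
  rw [h1, intervalIntegral.integral_comp_div _ hlam.ne', smul_eq_mul]
  apply mul_le_mul_of_nonneg_left _ hlam.le
  apply G2_range hg
  · simp only [Nat.cast_zero, zero_mul, add_zero]; positivity
  · have : 0 ≤ (n:ℝ) * l := by positivity
    simp only [Nat.cast_zero, zero_mul, add_zero]
    gcongr
    linarith

lemma count {A l lam : ℝ} (hA : 0 ≤ A) (hl : 1 ≤ l) (hlam : 4 ≤ lam) (n : ℕ) :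
    ∑ j ∈ Finset.range n, (if A + j * l < 102 * lam then (1:ℝ) else 0) ≤ 103 * lam := by
  rw [← Finset.sum_filter, Finset.sum_const, nsmul_eq_mul, mul_one]
  have : (Finset.range n).filter (fun j : ℕ => A + j * l < 102 * lam) ⊆
      Finset.range ⌈102 * lam⌉₊ := by
    intro j hj
    rw [Finset.mem_filter] at hj
    rw [Finset.mem_range, Nat.lt_ceil]
    have : (j:ℝ) * 1 ≤ j * l := by gcongr
    linarith [hj.2]
  have h1 := Finset.card_le_card this
  rw [Finset.card_range] at h1
  have h2 : (((Finset.range n).filter (fun j : ℕ => A + j * l < 102 * lam)).card : ℝ) ≤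
    (⌈102 * lam⌉₊ : ℝ) := by exact_mod_cast h1
  have h3 := Nat.ceil_lt_add_one (by linarith : 0 ≤ 102 * lam)
  linarith

lemma half : ∃ C > (0:ℝ), ∀ g : ℝ → ℝ, IsLimitG g → ∀ A ≥ (4:ℝ), ∀ R ≥ (1:ℝ), ∀ lam ≥ A,
    ∀ u : ℝ × ℝ → ℂ, ContDiff ℝ 1 u → (∀ x, ‖u x‖ ≤ 1) →
    IntegrableOn (gdens Avan lam u) (Ioc (-R / 2) (R / 2) ×ˢ Ioi A) →
    R * lam ^ 2 * (∫ b in (0:ℝ)..1, g b) - C * R * (lam * √lam) ≤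
      ∫ x in Ioc (-R / 2) (R / 2) ×ˢ Ioi A, gdens Avan lam u x := by
  obtain ⟨C, hC, hlow⟩ := low_cell
  refine ⟨C * 103, by positivity, fun g hg A hA R hR lam hlamA u hu hu1 hInt => ?_⟩
  have hlam : 4 ≤ lam := le_trans hA hlamA
  set f := gdens Avan lam u with hf
  have hfc : Continuous f := continuous_gdens continuous_Avan lam hu
  set N := ⌊R⌋₊ with hN
  have hN1 : 1 ≤ N := Nat.le_floor (by simpa using hR)
  have hN1' : (1:ℝ) ≤ N := by exact_mod_cast hN1
  have hNR : (N:ℝ) ≤ R := Nat.floor_le (by linarith)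
  have hRN : R < N + 1 := Nat.lt_floor_add_one R
  set l := R / N with hl
  have hNl : N * l = R := by rw [hl]; field_simp
  have hl1 : 1 ≤ l := by rw [hl, le_div_iff₀ (by linarith)]; linarith
  have hl2 : l ≤ 2 := by rw [hl, div_le_iff₀ (by linarith)]; linarith
  -- finite number of rows
  have hfin : ∀ n : ℕ, R * lam ^ 2 * (∫ b in (0:ℝ)..1, g b) - C * 103 * R * (lam * √lam) ≤
      ∫ x in Ioc (-R / 2) (R / 2) ×ˢ Ioc A (A + n * l), f x := by
    intro n
    have e : R / 2 = -R / 2 + N * l := by rw [hNl]; ring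
    rw [sum_rows hfc _ _ _ _ (by linarith)]
    have hrow : ∀ j ∈ Finset.range n, R * lam * (l * G2 g ((A + j * l + l) / lam))
        - R * C * √lam * (if A + j * l < 102 * lam then (1:ℝ) else 0)
        ≤ ∫ x in Ioc (-R / 2) (R / 2) ×ˢ Ioc (A + j * l) (A + j * l + l), f x := by
      intro j _
      have hj0 : 0 ≤ (j:ℝ) * l := by positivity
      rw [e, sum_cols hfc _ _ _ _ (by linarith)]
      have hcell : ∀ i ∈ Finset.range N, lam * l ^ 2 * G2 g ((A + j * l + l) / lam)
          - C * √lam * (if A + j * l < 102 * lam then (1:ℝ) else 0) ≤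
          ∫ x in Ioc (-R / 2 + i * l) (-R / 2 + i * l + l) ×ˢ Ioc (A + j * l) (A + j * l + l), f x := by
        intro i _
        rw [cell_Ioc]
        split_ifs with hc
        · rw [mul_one]
          exact hlow g hg lam hlam _ _ l (by linarith) hl1 hl2 u hu hu1
        · rw [mul_zero, sub_zero]
          refine le_trans ?_ (high_cell hlam (not_lt.mp hc) hl1 hl2 hu)
          exact mul_nonpos_of_nonneg_of_nonpos (by positivity) (G2_nonpos hg _)
      refine le_trans ?_ (Finset.sum_le_sum hcell)
      rw [Finset.sum_const, Finset.card_range, nsmul_eq_mul]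
      have h0 : 0 ≤ C * √lam * (if A + j * l < 102 * lam then (1:ℝ) else 0) := by
        split_ifs <;> simp; positivity
      have h1 := mul_le_mul_of_nonneg_right hNR h0
      have h2 : R * lam * (l * G2 g ((A + j * l + l) / lam))
          = N * (lam * l ^ 2 * G2 g ((A + j * l + l) / lam)) := by rw [← hNl]; ring
      rw [h2]
      linarith
    refine le_trans ?_ (Finset.sum_le_sum hrow)
    rw [Finset.sum_sub_distrib]
    have h1 := riemann hg (A := A) (l := l) (by linarith) (by linarith) (by linarith : 0 < lam) n
    have h2 := count (A := A) (l := l) (by linarith) hl1 hlam n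
    have h3 := mul_le_mul_of_nonneg_left h1 (by positivity : 0 ≤ R * lam)
    have h4 := mul_le_mul_of_nonneg_left h2 (by positivity : 0 ≤ R * C * √lam)
    rw [Finset.mul_sum _ _ (R * lam)] at h3
    rw [Finset.mul_sum _ _ (R * C * √lam)] at h4
    have e3 : R * lam ^ 2 * (∫ b in (0:ℝ)..1, g b) = R * lam * (lam * ∫ b in (0:ℝ)..1, g b) := by
      ring
    have e4 : C * 103 * R * (lam * √lam) = R * C * √lam * (103 * lam) := by ring
    rw [e3, e4]
    exact sub_le_sub h3 h4
  -- limit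
  have hU : (⋃ n : ℕ, Ioc (-R / 2) (R / 2) ×ˢ Ioc A (A + n * l)) = Ioc (-R / 2) (R / 2) ×ˢ Ioi A := by
    ext ⟨x, y⟩
    simp only [mem_iUnion, mem_prod, mem_Ioc, mem_Ioi]
    constructor
    · rintro ⟨n, h1, h2, _⟩; exact ⟨h1, h2⟩
    · rintro ⟨h1, h2⟩
      obtain ⟨n, hn⟩ := exists_nat_ge (y - A)
      refine ⟨n, h1, h2, ?_⟩
      have : (n:ℝ) * 1 ≤ n * l := by gcongr
      linarith
  have hlim := tendsto_setIntegral_of_monotone (μ := volume) (f := f)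
    (s := fun n : ℕ => Ioc (-R / 2) (R / 2) ×ˢ Ioc A (A + n * l))
    (fun n => measurableSet_Ioc.prod measurableSet_Ioc)
    (fun n n' h => prod_mono le_rfl (Ioc_subset_Ioc_right (by
      have : (n:ℝ) ≤ n' := by exact_mod_cast h
      gcongr)))
    (by rw [hU]; exact hInt)
  rw [hU] at hlim
  exact ge_of_tendsto hlim (Eventually.of_forall hfin)

/-- Reflection in the first axis. -/
def rfl2 (x : ℝ × ℝ) : ℝ × ℝ := (x.1, -x.2)

lemma rfl2_mp : MeasurePreserving rfl2 volume volume := by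
  have := (MeasurePreserving.id (volume : Measure ℝ)).prod
    (Measure.measurePreserving_neg (volume : Measure ℝ))
  exact this

lemma rfl2_emb : MeasurableEmbedding rfl2 :=
  ((MeasurableEquiv.refl ℝ).prodCongr (MeasurableEquiv.neg ℝ)).measurableEmbedding

lemma rfl2_contDiff : ContDiff ℝ 1 rfl2 := by unfold rfl2; fun_prop

lemma gdens_rfl2 {u : ℝ × ℝ → ℂ} (hu : ContDiff ℝ 1 u) (lam : ℝ) (x : ℝ × ℝ) :
    gdens Avan lam (fun y => u (rfl2 y)) x = gdens Avan lam u (rfl2 x) := by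
  have hr : HasFDerivAt rfl2 ((ContinuousLinearMap.fst ℝ ℝ ℝ).prod (-ContinuousLinearMap.snd ℝ ℝ ℝ)) x :=
    hasFDerivAt_fst.prodMk hasFDerivAt_snd.neg
  have h := ((hu.differentiable (by norm_num) (rfl2 x)).hasFDerivAt.comp x hr).fderiv
  have h' : fderiv ℝ (fun y => u (rfl2 y)) x = _ := h
  have e1 : fderiv ℝ (fun y => u (rfl2 y)) x (1, 0) = fderiv ℝ u (rfl2 x) (1, 0) := by
    rw [h']; simp
  have e2 : fderiv ℝ (fun y => u (rfl2 y)) x (0, 1) = - fderiv ℝ u (rfl2 x) (0, 1) := by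
    rw [h', ← map_neg]; simp
  unfold gdens magGradSq
  rw [e1, e2]
  simp [Avan, rfl2]

lemma slab {A : ℝ} (hA : 0 < A) (R : ℝ) : Strip R ∩ {x : ℝ × ℝ | A ≤ |x.2|} =
    (Ioo (-R / 2) (R / 2) ×ˢ Ici A) ∪ (Ioo (-R / 2) (R / 2) ×ˢ Iic (-A)) := by
  ext ⟨x, y⟩
  simp only [Strip, mem_inter_iff, mem_prod, mem_univ, and_true, mem_setOf_eq, mem_union, mem_Ici,
    mem_Iic, le_abs, ← and_or_left]
  have : A ≤ -y ↔ y ≤ -A := by constructor <;> intro h <;> linarith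
  rw [this]

lemma Ioo_Ici_ae (R A : ℝ) : (Ioo (-R / 2) (R / 2) ×ˢ Ici A : Set (ℝ × ℝ)) =ᵐ[volume]
    (Ioc (-R / 2) (R / 2) ×ˢ Ioi A : Set (ℝ × ℝ)) := by
  rw [Measure.volume_eq_prod]
  exact Measure.set_prod_ae_eq Ioo_ae_eq_Ioc Ioi_ae_eq_Ici.symm

lemma rfl2_pre (R A : ℝ) : rfl2 ⁻¹' (Ioo (-R / 2) (R / 2) ×ˢ Iic (-A)) =
    Ioo (-R / 2) (R / 2) ×ˢ Ici A := by
  ext ⟨x, y⟩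
  simp [rfl2]

/-- The key lower-bound lemma away from the zero set of the field. -/
theorem lemma_lower_bound (M : ℝ) (hM : 0 < M) (g : ℝ → ℝ) (hg : IsLimitG g) :
    ∃ C > (0:ℝ), ∃ A₀ : ℝ, A₀ ≥ 4 ∧ ∀ A ≥ A₀, ∀ R ≥ (1:ℝ), ∀ L : ℝ, 0 < L →
      L ≤ A ^ (-(3:ℝ)/2) → ∀ u : ℝ × ℝ → ℂ, ContDiff ℝ 1 u → (∀ x, ‖u x‖ ≤ 1) →
      (∫ x in Strip R, ‖u x‖ ^ 2) ≤ M * L ^ (-(2:ℝ)/3) * R →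
      (∫ x in Strip R ∩ {x : ℝ × ℝ | A ≤ |x.2|}, stripDensity L u x) ≥
        2 * R * L ^ (-(4:ℝ)/3) * (∫ b in (0:ℝ)..1, g b) - C * R * L⁻¹ := by
  obtain ⟨C, hC, hhalf⟩ := half
  refine ⟨2 * C, by positivity, 4, le_rfl, fun A hA R hR L hL hLA u hu hu1 _ => ?_⟩
  set lam := L ^ (-(2:ℝ)/3) with hlam
  have hA0 : 0 < A := by linarith
  have hlamA : A ≤ lam := by
    have h1 := Real.rpow_le_rpow_of_nonpos hL hLA (by norm_num : -(2:ℝ)/3 ≤ 0)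
    rw [← Real.rpow_mul hA0.le] at h1
    norm_num at h1
    rw [hlam]
    norm_num
    exact h1
  have hlam2 : L ^ (-(4:ℝ)/3) = lam ^ 2 := by
    rw [hlam, ← Real.rpow_natCast, ← Real.rpow_mul hL.le]; norm_num
  have hlam3 : L⁻¹ = lam * √lam := by
    rw [Real.sqrt_eq_rpow, hlam, ← Real.rpow_mul hL.le, ← Real.rpow_add hL, ← Real.rpow_neg_one]
    norm_num
  rw [hlam2, hlam3]
  have hd : stripDensity L u = gdens Avan lam u := rfl
  rw [hd]
  have hI0 : ∫ b in (0:ℝ)..1, g b ≤ 0 := by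
    have := G2_range hg (le_refl (0:ℝ)) (le_refl (0:ℝ))
    simpa using this
  have hlam0 : 0 ≤ lam := by linarith
  by_cases hInt : IntegrableOn (gdens Avan lam u) (Strip R ∩ {x : ℝ × ℝ | A ≤ |x.2|})
  · rw [slab hA0] at hInt ⊢
    have i1 := hInt.mono_set subset_union_left
    have i2 := hInt.mono_set subset_union_right
    have m2 : MeasurableSet (Ioo (-R / 2) (R / 2) ×ˢ Iic (-A) : Set (ℝ × ℝ)) :=
      measurableSet_Ioo.prod measurableSet_Iic
    have hdis : Disjoint (Ioo (-R / 2) (R / 2) ×ˢ Ici A : Set (ℝ × ℝ))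
        (Ioo (-R / 2) (R / 2) ×ˢ Iic (-A)) := by
      rw [Set.disjoint_prod]; right
      rw [Set.disjoint_left]
      intro y h1 h2
      simp only [mem_Ici, mem_Iic] at h1 h2
      linarith
    rw [setIntegral_union hdis m2 i1 i2]
    set ur : ℝ × ℝ → ℂ := fun y => u (rfl2 y) with hur
    have hgr : gdens Avan lam ur = fun x => gdens Avan lam u (rfl2 x) :=
      funext fun x => gdens_rfl2 hu lam x
    have e2 : ∫ x in Ioo (-R / 2) (R / 2) ×ˢ Iic (-A), gdens Avan lam u x =
        ∫ x in Ioo (-R / 2) (R / 2) ×ˢ Ici A, gdens Avan lam ur x := by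
      rw [← rfl2_mp.setIntegral_preimage_emb rfl2_emb, rfl2_pre, hgr]
    have i3 : IntegrableOn (gdens Avan lam ur) (Ioo (-R / 2) (R / 2) ×ˢ Ici A) := by
      rw [hgr, ← rfl2_pre]
      exact (rfl2_mp.integrableOn_comp_preimage rfl2_emb).mpr i2
    rw [e2, setIntegral_congr_set (Ioo_Ici_ae R A), setIntegral_congr_set (Ioo_Ici_ae R A)]
    have h1 := hhalf g hg A hA R hR lam hlamA u hu hu1 (i1.congr_set_ae (Ioo_Ici_ae R A).symm)
    have h2 := hhalf g hg A hA R hR lam hlamA ur (hu.comp rfl2_contDiff) (fun x => hu1 _)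
      (i3.congr_set_ae (Ioo_Ici_ae R A).symm)
    linarith
  · rw [integral_undef hInt]
    have h1 : 2 * R * lam ^ 2 * (∫ b in (0:ℝ)..1, g b) ≤ 0 :=
      mul_nonpos_of_nonneg_of_nonpos (by positivity) hI0
    have h2 : 0 ≤ 2 * C * R * (lam * √lam) := by positivity
    linarith

end
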